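/- Let K be a number field and S a finite set of places of K containing all the archimedean ones. Let Q₁, Q₂, Q₃, Q₄ be four distinct points in ℙ¹(K). Then the set ℱ = { P ∈ ℙ¹(K) : δ_𝔭(P,Q₁) = δ_𝔭(P,Q₂) and δ_𝔭(P,Q₃) = δ_𝔭(P,Q₄) for all primes 𝔭 ∉ S } is finite, with cardinality at most C(3,|S|) + 2, where C(3,s) = e^{18^9(3s−2)}. -/

import Mathlib

open NumberField IsDedekindDomain MvPolynomial
open scoped Classical nonZeroDivisors

set_option synthInstance.maxHeartbeats 1000000
set_option maxHeartbeats 1000000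

noncomputable section

/-- The projective line over `K`. -/
abbrev P1 (K : Type*) [Field K] := Projectivization K (Fin 2 → K)

variable {K : Type*} [Field K] [NumberField K]

/-- The additive `v`-adic valuation (order) of `x ∈ K`, with junk value `0` at `x = 0`,
normalized so that it is surjective onto `ℤ`. -/
def ordAt (v : HeightOneSpectrum (𝓞 K)) (x : K) : ℤ :=
  if hx : x = 0 then 0
  else - Multiplicative.toAdd (WithZero.unzero ((v.valuation K).ne_zero_iff.mpr hx))

/-- `min (v(x), v(y))` for a pair of coordinates, not both zero. -/
def minOrd (v : HeightOneSpectrum (𝓞 K)) (x y : K) : ℤ :=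
  if x = 0 then ordAt v y else if y = 0 then ordAt v x else min (ordAt v x) (ordAt v y)

/-- The `v`-adic logarithmic distance between two points of `ℙ¹(K)`:
`δ_v(P,Q) = v(x₁y₂ - x₂y₁) - min(v x₁, v y₁) - min(v x₂, v y₂)`, with value `⊤` when `P = Q`
(it is independent of the choice of homogeneous coordinates, so we compute it on the chosen
representatives). -/
def logDist (v : HeightOneSpectrum (𝓞 K)) (P Q : P1 K) : WithTop ℤ :=
  if P = Q then ⊤
  else ((ordAt v (P.rep 0 * Q.rep 1 - P.rep 1 * Q.rep 0)
        - minOrd v (P.rep 0) (P.rep 1) - minOrd v (Q.rep 0) (Q.rep 1) : ℤ) : WithTop ℤ)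

/-- An endomorphism of `ℙ¹` of degree `d` defined over `K`, given by a pair of homogeneous
forms of degree `d` with no common zero over the algebraic closure, together with the induced
self-map of `ℙ¹(K)`. -/
structure P1Map (K : Type*) [Field K] (d : ℕ) where
  toFun : P1 K → P1 K
  F : MvPolynomial (Fin 2) K
  G : MvPolynomial (Fin 2) K
  homF : F.IsHomogeneous d
  homG : G.IsHomogeneous d
  coprime : ∀ x y : AlgebraicClosure K,
    aeval ![x, y] F = 0 → aeval ![x, y] G = 0 → x = 0 ∧ y = 0
  compat : ∀ (x y : K) (hxy : ![x, y] ≠ 0)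
    (h : ![eval ![x, y] F, eval ![x, y] G] ≠ 0),
    toFun (Projectivization.mk K ![x, y] hxy) =
      Projectivization.mk K ![eval ![x, y] F, eval ![x, y] G] h

variable {d : ℕ}

/-- `φ` has good reduction at the finite place `v`: some representing pair of forms has
coefficients in the valuation ring at `v`, not all in the maximal ideal, and the reductions
of the two forms modulo `v` have no common zero in `ℙ¹` of the algebraic closure of the
residue field. -/
def GoodReductionAt (φ : P1Map K d) (v : HeightOneSpectrum (𝓞 K)) : Prop :=
  ∃ c : K, c ≠ 0 ∧
    ∃ F₀ G₀ : MvPolynomial (Fin 2) (v.valuation (K := K)).valuationSubring,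
      MvPolynomial.map ((v.valuation (K := K)).valuationSubring.subtype) F₀ = C c * φ.F ∧
      MvPolynomial.map ((v.valuation (K := K)).valuationSubring.subtype) G₀ = C c * φ.G ∧
      ((∃ m, F₀.coeff m ∉ IsLocalRing.maximalIdeal (v.valuation (K := K)).valuationSubring) ∨
        (∃ m, G₀.coeff m ∉ IsLocalRing.maximalIdeal (v.valuation (K := K)).valuationSubring)) ∧
      ∀ x y : AlgebraicClosure
          (IsLocalRing.ResidueField (v.valuation (K := K)).valuationSubring),
        eval ![x, y] (MvPolynomial.map
          ((algebraMap (IsLocalRing.ResidueField (v.valuation (K := K)).valuationSubring)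
              (AlgebraicClosure _)).comp
            (IsLocalRing.residue _)) F₀) = 0 →
        eval ![x, y] (MvPolynomial.map
          ((algebraMap (IsLocalRing.ResidueField (v.valuation (K := K)).valuationSubring)
              (AlgebraicClosure _)).comp
            (IsLocalRing.residue _)) G₀) = 0 →
        x = 0 ∧ y = 0

/-- `φ` has good reduction outside `S`, where `S` consists of all archimedean places together
with the finite places in `T`. -/
def GoodReductionOutside (φ : P1Map K d) (T : Finset (HeightOneSpectrum (𝓞 K))) : Prop :=
  ∀ v ∉ T, GoodReductionAt φ v

/-- `P` is a periodic point of `φ`. -/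
def IsPeriodicPoint (φ : P1Map K d) (P : P1 K) : Prop :=
  ∃ n, 0 < n ∧ φ.toFun^[n] P = P

/-- `P` is a preperiodic point of `φ`. -/
def IsPreperiodicPoint (φ : P1Map K d) (P : P1 K) : Prop :=
  ∃ m, IsPeriodicPoint φ (φ.toFun^[m] P)

/-- `P` is a tail point of `φ`: preperiodic but not periodic. -/
def IsTailPoint (φ : P1Map K d) (P : P1 K) : Prop :=
  IsPreperiodicPoint φ P ∧ ¬ IsPeriodicPoint φ P

/-- The set `Tail(φ,K,P)` of `K`-rational tail points of `P`: non-periodic points having `P`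
in their forward orbit. -/
def TailOf (φ : P1Map K d) (P : P1 K) : Set (P1 K) :=
  {Q | ¬ IsPeriodicPoint φ Q ∧ ∃ n, φ.toFun^[n] Q = P}

/-- `P = [a:b]` is a critical point of `φ = [F:G]`: the algebraic condition
`φ([x:y]) = φ([a:b])`, i.e. the form `G(a,b)·F(X,Y) - F(a,b)·G(X,Y)`, vanishes to order
at least `2` at `[a:b]`. -/
def IsCriticalPt (φ : P1Map K d) (P : P1 K) : Prop :=
  ∃ (a b : K) (hab : ![a, b] ≠ 0), P = Projectivization.mk K ![a, b] hab ∧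
    (C b * X 0 - C a * X 1) ^ 2 ∣
      (C (eval ![a, b] φ.G) * φ.F - C (eval ![a, b] φ.F) * φ.G)

/-- `P` belongs to a critical cycle of `φ`: it lies in the orbit of a critical periodic
point. -/
def InCriticalCycle (φ : P1Map K d) (P : P1 K) : Prop :=
  ∃ Q, IsCriticalPt φ Q ∧ IsPeriodicPoint φ Q ∧ ∃ n, φ.toFun^[n] Q = P

/-- The cardinality `|S|` of the set of places `S` consisting of all archimedean places
together with the finite places in `T`. -/
def sCard (K : Type*) [Field K] [NumberField K] (T : Finset (HeightOneSpectrum (𝓞 K))) : ℕ :=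
  T.card + Fintype.card (InfinitePlace K)

/-- `B(s) = 2^{16 s}`. -/
def Bconst (s : ℕ) : ℕ := 2 ^ (16 * s)

/-- `C(n,s) = e^{(6n)^{3n} (n s + 1 - n)}`. -/
def Cconst (n s : ℕ) : ℝ := Real.exp ((6 * n : ℝ) ^ (3 * n) * (n * s + 1 - n))

/-- `CV(d,s) = (3B(s)+13)d + 27B(s) + C(5,s) + 6C(3,s) + 32`. -/
def CVconst (d s : ℕ) : ℝ :=
  (3 * (Bconst s : ℝ) + 13) * d + 27 * (Bconst s : ℝ) + Cconst 5 s + 6 * Cconst 3 s + 32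

/-- `L₁(d,s) = (d-1)(1 + d(1 + B(s)))`. -/
def L1const (d s : ℕ) : ℕ := (d - 1) * (1 + d * (1 + Bconst s))

/-- `L₂(d,s) = max{(2(C(3,s)+2)+1)d + 1, (d-1)(1 + B(s)(B(s) + C(3,s) + 3))}`. -/
def L2const (d s : ℕ) : ℝ :=
  max ((2 * (Cconst 3 s + 2) + 1) * d + 1)
    (((d : ℝ) - 1) * (1 + (Bconst s : ℝ) * ((Bconst s : ℝ) + Cconst 3 s + 3)))

/-- `L₃(d,s) = ((1 + 3B(s))B(s) + 1)(d-1)`. -/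
def L3const (d s : ℕ) : ℕ := ((1 + 3 * Bconst s) * Bconst s + 1) * (d - 1)

/-- `L₄(d,s) = (C(3,s) + 3)(d-1)`. -/
def L4const (d s : ℕ) : ℝ := (Cconst 3 s + 3) * ((d : ℝ) - 1)

end

/-!
Let `x` be the coordinate on the projective line taking the values `0`, `∞`, `1` at `Q 0`, `Q 1`,
`Q 3`, let `l` be its value at `Q 2`, and put `y = (x - l) / (x - 1)`. Equality of the logarithmic
distances says that `|x|_v` and `|y|_v` are the same for all points of `ℱ` when `v ∉ S`, so the
ratios of two solutions `(x, y)` of `y * (x - 1) = x - l` are `S`-units. The logarithms of `|x|_v`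
and `|y|_v` for `v ∈ S`, together with two further coordinates recording the places outside `S`,
therefore embed the solutions in a real vector space of dimension `2 |S| + 2`, whose `ℓ¹` distance
between two solutions is twice the sum of the heights of `x / x'` and `y / y'`.

* Solutions of small height are covered by small cells, each containing at most 58 of them. If `l`
  has large height, eliminating `y` and `x * y` between three solutions already shows that a cell
  contains at most two. If not, the `4 × 4` determinant formed from the 29-th powers of `1`, `x`,
  `y`, `x * y` at four solutions of the cell is congruent modulo 29 to the 29-th power of a
  determinant that vanishes, so it is divisible by 29; by the product formula it is zero. Hence the
  `x` in a cell are roots of a fixed nonzero polynomial of degree at most 58.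

* Solutions of large height are covered by narrow cones. The Thue–Siegel method, with auxiliary
  polynomials from Siegel's lemma and a Wronskian zero estimate, shows that the heights in one cone
  lie in a window of bounded ratio. The window is cut into thin layers, and again by elimination
  each layer contains at most two solutions.
-/

namespace FourPoint

open Height Height.AdmissibleAbsValues Module

section Packing

open MeasureTheory Metric
open scoped ENNReal

theorem card_le_mul_of_ball_card_le {α E : Type*} [NormedAddCommGroup E] [NormedSpace ℝ E]
    [FiniteDimensional ℝ E] {Z : Finset α} {f : α → E} {R d : ℝ} {m : ℕ} (hR : 0 ≤ R)
    (hd : 0 < d) (hf : ∀ z ∈ Z, ‖f z‖ ≤ R)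
    (hm : ∀ c ∈ Z, (Z.filter fun z => ‖f z - f c‖ < d).card ≤ m) :
    (Z.card : ℝ) ≤ m * (1 + 2 * R / d) ^ finrank ℝ E := by
  borelize E
  let μ : Measure E := Measure.addHaar
  have overlap (y : E) :
      ∑ z ∈ Z, (ball (f z) (d / 2)).indicator (1 : E → ℝ≥0∞) y ≤
        (ball 0 (R + d / 2)).indicator (fun _ => (m : ℝ≥0∞)) y := by
    simp only [Set.indicator_apply, Pi.one_apply, ← Finset.sum_filter, Finset.sum_const,
      nsmul_one]
    rcases (Z.filter fun z => y ∈ ball (f z) (d / 2)).eq_empty_or_nonempty with h | ⟨c, hc⟩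
    · rw [h, Finset.card_empty, Nat.cast_zero]
      exact zero_le
    obtain ⟨hcZ, hyc⟩ := Finset.mem_filter.1 hc
    have hy : y ∈ ball (0 : E) (R + d / 2) :=
      ball_subset_ball' (by rw [dist_zero_right]; linarith [hf c hcZ]) hyc
    rw [if_pos hy]
    refine Nat.cast_le.2 ((Finset.card_le_card fun z hz => ?_).trans (hm c hcZ))
    obtain ⟨hzZ, hyz⟩ := Finset.mem_filter.1 hz
    refine Finset.mem_filter.2 ⟨hzZ, ?_⟩
    rw [← dist_eq_norm]
    linarith [dist_triangle_left (f z) (f c) y, mem_ball.1 hyz, mem_ball.1 hyc]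
  have volume_le : (Z.card : ℝ≥0∞) * ENNReal.ofReal ((d / 2) ^ finrank ℝ E) * μ (ball 0 1) ≤
      m * ENNReal.ofReal ((R + d / 2) ^ finrank ℝ E) * μ (ball 0 1) := by
    have h := lintegral_mono (μ := μ) overlap
    rw [lintegral_finsetSum _ fun z _ => measurable_one.indicator measurableSet_ball,
      lintegral_indicator_const measurableSet_ball] at h
    simpa [lintegral_indicator_one, measurableSet_ball, μ.addHaar_ball_of_pos _ (half_pos hd),
      μ.addHaar_ball_of_pos _ (by positivity : 0 < R + d / 2), mul_assoc] using h
  rw [ENNReal.mul_le_mul_iff_left (measure_ball_pos _ _ zero_lt_one).ne' measure_ball_lt_top.ne,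
    ← ENNReal.ofReal_natCast, ← ENNReal.ofReal_natCast m, ← ENNReal.ofReal_mul (by positivity),
    ← ENNReal.ofReal_mul (by positivity), ENNReal.ofReal_le_ofReal_iff (by positivity)] at volume_le
  rw [show 1 + 2 * R / d = (R + d / 2) / (d / 2) by field_simp; ring, div_pow, ← mul_div_assoc,
    le_div_iff₀ (by positivity)]
  exact volume_le

end Packing

section Heights

theorem logHeight₁_le_of_absVal_le {K : Type*} [Field K] [AdmissibleAbsValues K] {ι : Type*}
    [Fintype ι] {x A : K} (hA : A ≠ 0) {C : ℝ} (hC : 0 < C) (a : ι → K) (e : ι → ℕ)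
    (harch : ∀ v ∈ archAbsVal (K := K),
      max (v x) 1 * v A ≤ C * ∏ i, max (v (a i)) 1 ^ e i)
    (hnonarch : ∀ v ∈ nonarchAbsVal (K := K),
      max (v x) 1 * v A ≤ ∏ i, max (v (a i)) 1 ^ e i) :
    logHeight₁ x ≤ totalWeight K * Real.log C + ∑ i, e i * logHeight₁ (a i) := by
  have mulHeight₁_le : mulHeight₁ x ≤ C ^ totalWeight K * ∏ i, mulHeight₁ (a i) ^ e i := calc
    mulHeight₁ x
      = (archAbsVal.map fun v : AbsoluteValue K ℝ ↦ max (v x) 1 * v A).prod *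
          ∏ᶠ v : nonarchAbsVal (K := K), max (v.val x) 1 * v.val A := by
        rw [Multiset.prod_map_mul,
          finprod_mul_distrib (by fun_prop) (by fun_prop (disch := assumption)),
          mul_mul_mul_comm, product_formula hA, mul_one, Height.mulHeight₁_eq]
    _ ≤ (archAbsVal.map fun v : AbsoluteValue K ℝ ↦ C * ∏ i, max (v (a i)) 1 ^ e i).prod *
          ∏ᶠ v : nonarchAbsVal (K := K), ∏ i, max (v.val (a i)) 1 ^ e i := by
        gcongr
        · exact finprod_nonneg fun v ↦ mul_nonneg (by positivity) (v.val.nonneg _)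
        · exact Multiset.prod_map_nonneg fun v _ ↦ by positivity
        · exact Multiset.prod_map_le_prod_map₀ _ _
            (fun v _ ↦ mul_nonneg (by positivity) (v.nonneg _)) harch
        · exact finprod_le_finprod (by fun_prop (disch := assumption))
            (fun v ↦ mul_nonneg (by positivity) (v.val.nonneg _)) (by fun_prop)
            fun v ↦ hnonarch v.1 v.2
    _ = C ^ totalWeight K * ∏ i, mulHeight₁ (a i) ^ e i := by
        rw [Multiset.prod_map_mul, finprod_prod_comm _ _ (by fun_prop), Multiset.prod_map_prod]
        simp only [Multiset.map_const', Multiset.prod_replicate, Height.mulHeight₁_eq, mul_pow,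
          Finset.prod_mul_distrib, Multiset.prod_map_pow, mul_assoc]
        congr! 3 with i
        exact (finprod_pow (f := fun v : nonarchAbsVal (K := K) => max (v.val (a i)) 1)
          (by fun_prop) (e i)).symm
  have := Real.log_le_log (by positivity) mulHeight₁_le
  rw [Real.log_mul (by positivity) (by positivity), Real.log_pow,
    Real.log_prod fun i _ => by positivity] at this
  simpa [logHeight₁_eq_log_mulHeight₁, Real.log_pow] using this

end Heights

section LogVector

variable {K : Type*} [Field K] [NumberField K] (T : Finset (HeightOneSpectrum (𝓞 K)))

/-- The property that `x` and `y` have the same absolute value at each finite place outside `T`: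
for nonzero `x` and `y` this says that `x / y` is a `T`-unit. -/
def AgreeOutside (x y : K) : Prop := ∀ v : FinitePlace K, v.maximalIdeal ∉ T → v x = v y

/-- The contribution to `2 * logHeight₁ z` of the finite places outside `T`. -/
noncomputable def logNormOutside (z : K) : ℝ :=
  ∑ᶠ v ∈ {v : FinitePlace K | v.maximalIdeal ∉ T}, |Real.log (v z)|

/-- The space of the vectors `logVector T z`, with the `ℓ¹` norm. -/
abbrev LogSpace := PiLp 1 fun _ : (InfinitePlace K ⊕ T) ⊕ Unit => ℝ

/-- The vector of normalized logarithms of the absolute values of `z` at the infinite places and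
the places in `T`, completed by `logNormOutside T z` so that its `ℓ¹` norm is
`2 * logHeight₁ z`. -/
noncomputable def logVector (z : K) : LogSpace T :=
  WithLp.toLp 1 (Sum.elim
    (Sum.elim (fun v => v.mult * Real.log (v z)) fun p => Real.log (FinitePlace.mk p.1 z))
    fun _ => logNormOutside T z)

variable {T}

theorem logNormOutside_nonneg (z : K) : 0 ≤ logNormOutside T z :=
  finsum_nonneg fun _ => finsum_nonneg fun _ => abs_nonneg _

theorem norm_logVector_eq_sum (z : K) :
    ‖logVector T z‖ = ∑ v : InfinitePlace K, v.mult * |Real.log (v z)| +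
      (∑ p ∈ T, |Real.log (FinitePlace.mk p z)| + logNormOutside T z) := by
  rw [← Finset.sum_coe_sort T]
  simp [PiLp.norm_eq_of_L1, logVector, abs_mul, abs_of_nonneg (logNormOutside_nonneg z), add_assoc]

theorem sum_add_logNormOutside {z : K} (hz : z ≠ 0) :
    ∑ p ∈ T, |Real.log (FinitePlace.mk p z)| + logNormOutside T z =
      ∑ᶠ v : FinitePlace K, |Real.log (v z)| := by
  have hT : {v : FinitePlace K | v.maximalIdeal ∈ T} = FinitePlace.mk '' (T : Set _) := by
    ext v
    refine ⟨fun hv => ⟨_, hv, FinitePlace.mk_maximalIdeal v⟩, ?_⟩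
    rintro ⟨p, hp, rfl⟩
    simpa [FinitePlace.maximalIdeal_mk] using hp
  have hsupport : (Function.support fun v : FinitePlace K => |Real.log (v z)|).Finite :=
    (FinitePlace.hasFiniteMulSupport hz).subset fun v hv h => hv (by simp_all)
  rw [← finsum_mem_coe_finset, ← finsum_mem_univ fun v : FinitePlace K => |Real.log (v z)|,
    ← finsum_mem_add_sdiff' (Set.subset_univ {v : FinitePlace K | v.maximalIdeal ∈ T})
      (hsupport.subset Set.inter_subset_right), hT,
    finsum_mem_image fun _ _ _ _ h => FinitePlace.mk_eq_iff.mp h, ← hT, ← Set.compl_eq_univ_sdiff]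
  rfl

theorem norm_logVector {z : K} (hz : z ≠ 0) : ‖logVector T z‖ = 2 * logHeight₁ z := by
  have posLog_add_posLog_inv (a : ℝ) : Real.posLog a + Real.posLog a⁻¹ = |Real.log a| := by
    rw [← Real.half_mul_log_add_log_abs, ← Real.half_mul_log_add_log_abs, Real.log_inv, abs_neg]
    ring
  have hfin {f : FinitePlace K → ℝ} (hf : ∀ v, v z = 1 → f v = 0) : (Function.support f).Finite :=
    (FinitePlace.hasFiniteMulSupport hz).subset fun v hv h => hv (hf v h)
  rw [norm_logVector_eq_sum, sum_add_logNormOutside hz]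
  symm
  calc 2 * logHeight₁ z = logHeight₁ z + logHeight₁ z⁻¹ := by rw [logHeight₁_inv]; ring
    _ = _ := by
      simp_rw [NumberField.logHeight₁_eq, map_inv₀, ← posLog_add_posLog_inv, mul_add]
      rw [Finset.sum_add_distrib, finsum_add_distrib (hfin fun v hv => by simp [hv])
        (hfin fun v hv => by simp [hv])]
      ring

namespace AgreeOutside

variable {x y : K}

theorem logNormOutside_eq (h : AgreeOutside T x y) : logNormOutside T x = logNormOutside T y :=
  finsum_mem_congr rfl fun v hv => by rw [h v hv]

theorem logNormOutside_div_pow (h : AgreeOutside T x y) (hx : x ≠ 0) {n : ℕ} (hn : 1 ≤ n) :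
    logNormOutside T (y / x ^ n) = (n - 1) * logNormOutside T x := by
  have hn' : (0 : ℝ) ≤ n - 1 := sub_nonneg.2 (by exact_mod_cast hn)
  simp only [logNormOutside, ← smul_eq_mul (a := (n : ℝ) - 1), smul_finsum]
  refine finsum_mem_congr rfl fun v hv => ?_
  have hvx : v x ≠ 0 := by simpa using hx
  rw [map_div₀, map_pow, ← h v hv, Real.log_div hvx (pow_ne_zero n hvx), Real.log_pow, smul_eq_mul,
    ← one_sub_mul, abs_mul, abs_sub_comm, abs_of_nonneg hn']

theorem norm_logVector_sub_smul (h : AgreeOutside T x y) (hx : x ≠ 0) (hy : y ≠ 0) {n : ℕ}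
    (hn : 1 ≤ n) :
    ‖logVector T y - (n : ℝ) • logVector T x‖ = 2 * logHeight₁ (y / x ^ n) := by
  have log_div_pow (a b : ℝ) (ha : a ≠ 0) (hb : b ≠ 0) :
      Real.log (b / a ^ n) = Real.log b - n * Real.log a := by
    rw [Real.log_div hb (pow_ne_zero n ha), Real.log_pow]
  rw [← norm_logVector (T := T) (div_ne_zero hy (pow_ne_zero n hx)), PiLp.norm_eq_of_L1,
    PiLp.norm_eq_of_L1]
  refine Finset.sum_congr rfl fun i _ => ?_
  rcases i with (v | p) | _ <;>
    simp only [logVector, PiLp.sub_apply, PiLp.smul_apply, Sum.elim_inl, Sum.elim_inr, smul_eq_mul]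
  · rw [map_div₀, map_pow, log_div_pow _ _ (by simpa using hx) (by simpa using hy)]
    ring_nf
  · rw [map_div₀, map_pow, log_div_pow _ _ (by simpa using hx) (by simpa using hy)]
  · rw [h.logNormOutside_div_pow hx hn, ← h.logNormOutside_eq, ← norm_neg]
    ring_nf

end AgreeOutside

theorem finrank_logSpace : finrank ℝ (LogSpace T) = sCard K T + 1 := by
  rw [(WithLp.linearEquiv 1 ℝ _).finrank_eq, finrank_fintype_fun_eq_card]
  simp [sCard, add_comm]

end LogVector

section AuxiliaryPolynomials

open Polynomial

-- Plain `X` and `C` would be ambiguous with those of `MvPolynomial`.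
local notation "X" => Polynomial.X
local notation "C" => Polynomial.C

section Wronskian

variable {R : Type*} [CommRing R]

theorem prod_dvd_det {n : Type*} [Fintype n] [DecidableEq n] {M : Matrix n n R} {c : n → R}
    (h : ∀ i j, c j ∣ M i j) : ∏ j, c j ∣ M.det := by
  rw [Matrix.det_apply']
  exact Finset.dvd_sum fun σ _ => Dvd.dvd.mul_left
    (Finset.prod_dvd_prod_of_dvd _ _ fun j _ => h (σ j) j) _

theorem natDegree_det_le {n : Type*} [Fintype n] [DecidableEq n] {M : Matrix n n R[X]}
    {d : n → ℕ} (h : ∀ i j, (M i j).natDegree ≤ d j) : M.det.natDegree ≤ ∑ j, d j := by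
  rw [Matrix.det_apply]
  exact natDegree_sum_le_of_forall_le _ _ fun σ _ => (natDegree_smul_le _ _).trans
    ((natDegree_prod_le _ _).trans (Finset.sum_le_sum fun j _ => h (σ j) j))

/-- The Wronskian determinant of `n` polynomials; `Polynomial.wronskian` is the case `n = 2`. -/
noncomputable def wronskianDet {n : ℕ} (f : Fin n → R[X]) : R[X] :=
  Matrix.det (Matrix.of fun i j : Fin n => derivative^[i] (f j))

theorem wronskianDet_three (a b c : R[X]) :
    wronskianDet ![a, b, c] =
      a * (derivative b * derivative (derivative c) - derivative (derivative b) * derivative c) -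
        derivative a * (b * derivative (derivative c) - derivative (derivative b) * c) +
        derivative (derivative a) * (b * derivative c - derivative b * c) := by
  simp only [wronskianDet, Matrix.det_fin_three, Matrix.of_apply, Fin.coe_ofNat_eq_mod,
    Nat.zero_mod, Nat.one_mod, Nat.mod_succ, Matrix.cons_val_zero, Matrix.cons_val_one,
    Matrix.cons_val, Function.iterate_zero, Function.iterate_succ, Function.comp_apply, id_eq]
  ring

theorem natDegree_wronskianDet_le {n : ℕ} {f : Fin n → R[X]} {d : Fin n → ℕ}
    (hf : ∀ j, (f j).natDegree ≤ d j) : (wronskianDet f).natDegree ≤ ∑ j, d j :=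
  natDegree_det_le fun i j => (natDegree_iterate_derivative (f j) i).trans
    ((Nat.sub_le _ _).trans (hf j))

theorem prod_pow_dvd_wronskianDet {n : ℕ} {f : Fin n → R[X]} {r : R[X]} {e : Fin n → ℕ}
    (hf : ∀ j, r ^ e j ∣ f j) : ∏ j, r ^ (e j - (n - 1)) ∣ wronskianDet f :=
  prod_dvd_det fun i j => (pow_dvd_pow r (by lia)).trans
    (pow_sub_dvd_iterate_derivative_of_pow_dvd i (hf j))

end Wronskian

section LinearDependence

variable {K : Type*} [Field K] [CharZero K]

theorem exists_eq_C_mul_of_wronskian_eq_zero {a b : K[X]} (ha : a ≠ 0)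
    (h : wronskian a b = 0) : ∃ μ, b = C μ * a := by
  obtain ⟨a', ha'⟩ := EuclideanDomain.gcd_dvd_left a b
  obtain ⟨b', hb'⟩ := EuclideanDomain.gcd_dvd_right a b
  set d := EuclideanDomain.gcd a b
  have hd : d ≠ 0 := left_ne_zero_of_mul (ha' ▸ ha)
  have hcoprime : IsCoprime a' b' := by
    refine ⟨EuclideanDomain.gcdA a b, EuclideanDomain.gcdB a b, mul_left_cancel₀ hd ?_⟩
    linear_combination -EuclideanDomain.gcd_eq_gcd_ab a b -
      EuclideanDomain.gcdA a b * ha' - EuclideanDomain.gcdB a b * hb'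
  have hwronskian : wronskian a' b' = 0 := by
    refine (mul_eq_zero.1 ?_).resolve_left (pow_ne_zero 2 hd)
    rw [← h, ha', hb']
    simp only [wronskian, derivative_mul]
    ring
  obtain ⟨ha'', hb''⟩ := hcoprime.wronskian_eq_zero_iff.1 hwronskian
  have ha'_eq := eq_C_of_derivative_eq_zero ha''
  have hb'_eq := eq_C_of_derivative_eq_zero hb''
  have ha'_ne : a'.coeff 0 ≠ 0 := fun h0 => ha (by rw [ha', ha'_eq, h0, map_zero, mul_zero])
  refine ⟨b'.coeff 0 / a'.coeff 0, ?_⟩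
  rw [hb', ha', ha'_eq, hb'_eq, mul_left_comm, ← Polynomial.C_mul]
  simp [div_mul_cancel₀ _ ha'_ne]

theorem exists_linear_relation_of_wronskianDet_eq_zero {a b c : K[X]}
    (h : wronskianDet ![a, b, c] = 0) :
    ∃ α β γ : K, (α ≠ 0 ∨ β ≠ 0 ∨ γ ≠ 0) ∧ C α * a + C β * b + C γ * c = 0 := by
  rw [wronskianDet_three] at h
  by_cases hab : wronskian a b = 0
  · by_cases ha : a = 0
    · exact ⟨1, 0, 0, by simp, by simp [ha]⟩
    obtain ⟨μ, rfl⟩ := exists_eq_C_mul_of_wronskian_eq_zero ha hab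
    exact ⟨-μ, 1, 0, by simp, by simp⟩
  -- `wronskian f g` is `-f ^ 2` times the derivative of `f / g`: the three two-term Wronskians,
  -- which are the coefficients of a linear relation, have constant ratios.
  have hbc : wronskian (wronskian a b) (wronskian b c) = 0 := by
    simp only [wronskian, derivative_sub, derivative_mul] at h ⊢
    linear_combination b * h
  have hca : wronskian (wronskian a b) (wronskian c a) = 0 := by
    simp only [wronskian, derivative_sub, derivative_mul] at h ⊢
    linear_combination -a * h
  obtain ⟨μ, hμ⟩ := exists_eq_C_mul_of_wronskian_eq_zero hab hbc
  obtain ⟨ν, hν⟩ := exists_eq_C_mul_of_wronskian_eq_zero hab hca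
  refine ⟨μ, ν, 1, by simp, mul_left_cancel₀ hab ?_⟩
  have hrel : wronskian b c * a + wronskian c a * b + wronskian a b * c = 0 := by
    simp only [wronskian]
    ring
  rw [hμ, hν] at hrel
  rw [map_one]
  linear_combination hrel

end LinearDependence

section ZeroEstimate

/-- The monomials `1, xⁿ, yⁿ, xⁿyⁿ` on the curve `y * (x - 1) = x - l`, multiplied by
`(x - 1) ^ n` to make them polynomials in `x`. -/
noncomputable def curveMonomial {R : Type*} [CommRing R] (l : R) (n : ℕ) : Fin 4 → R[X] :=
  ![(X - C 1) ^ n, X ^ n * (X - C 1) ^ n, (X - C l) ^ n, X ^ n * (X - C l) ^ n]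

theorem map_curveMonomial {R S : Type*} [CommRing R] [CommRing S] (φ : R →+* S) (l : R) (n : ℕ)
    (i : Fin 4) : (curveMonomial l n i).map φ = curveMonomial (φ l) n i := by
  fin_cases i <;> simp [curveMonomial]

/-- The monomials spanning the polynomials of degree at most one in each of two variables. -/
def bilinearMonomials {R : Type*} [CommRing R] (x y : R) : Fin 4 → R := ![1, x, y, x * y]

theorem eval_curveMonomial {R : Type*} [CommRing R] {l x y : R} (hxy : y * (x - 1) = x - l)
    (n : ℕ) (i : Fin 4) : (curveMonomial l n i).eval x =
      (x - 1) ^ n * bilinearMonomials (x ^ n) (y ^ n) i := by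
  fin_cases i <;> simp [curveMonomial, bilinearMonomials, ← hxy, mul_pow] <;> ring

variable {K : Type*} [Field K]

theorem natDegree_X_sub_C_pow (p : K) (n : ℕ) : ((X - C p) ^ n).natDegree = n := by
  rw [natDegree_pow, natDegree_X_sub_C, mul_one]

theorem isCoprime_X_sub_C_pow {p q : K} (h : p ≠ q) (m n : ℕ) :
    IsCoprime ((X - C p) ^ m : K[X]) ((X - C q) ^ n) :=
  (pairwise_coprime_X_sub_C Function.injective_id h).pow

theorem eq_zero_of_X_sub_C_pow_dvd {p : K} {n : ℕ} {f : K[X]} (hf : f.natDegree < n)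
    (h : (X - C p) ^ n ∣ f) : f = 0 :=
  eq_zero_of_dvd_of_natDegree_lt h (by rwa [natDegree_X_sub_C_pow])

theorem eq_zero_of_add_mul_X_pow_eq_zero {n : ℕ} {c d : K[X]} (hc : c.natDegree < n)
    (h : c + d * X ^ n = 0) : c = 0 ∧ d = 0 := by
  have hc0 : c = 0 := eq_zero_of_X_sub_C_pow_dvd (p := 0) hc
    ⟨-d, by rw [map_zero, sub_zero]; linear_combination h⟩
  subst hc0
  simpa using h

theorem eq_zero_of_curve_relation {p q : K} (hp : p ≠ 0) (hpq : p ≠ q) {n : ℕ}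
    {a b c d : K[X]} (ha : a.natDegree < n) (hb : b.natDegree < n) (hc : c.natDegree < n)
    (h : (a + b * X ^ n) * (X - C q) ^ n + (c + d * X ^ n) * (X - C p) ^ n = 0)
    (hab : a = 0 ∨ b = 0) : a = 0 ∧ b = 0 ∧ c = 0 ∧ d = 0 := by
  have hdvd : (X - C p) ^ n ∣ a + b * X ^ n :=
    (isCoprime_X_sub_C_pow hpq n n).dvd_of_dvd_mul_right
      ⟨-(c + d * X ^ n), by linear_combination h⟩
  have hab0 : a = 0 ∧ b = 0 := by
    rcases hab with rfl | rfl
    · rw [zero_add] at hdvd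
      refine ⟨rfl, eq_zero_of_X_sub_C_pow_dvd hb
        ((isCoprime_X_sub_C_pow hp n n).dvd_of_dvd_mul_right ?_)⟩
      simpa using hdvd
    · exact ⟨eq_zero_of_X_sub_C_pow_dvd ha (by simpa using hdvd), rfl⟩
  obtain ⟨rfl, rfl⟩ := hab0
  refine ⟨rfl, rfl, eq_zero_of_add_mul_X_pow_eq_zero hc ?_⟩
  exact (mul_eq_zero.1 (by linear_combination h)).resolve_right
    (pow_ne_zero n (X_sub_C_ne_zero p))

theorem X_sub_C_pow_dvd_iff_forall_coeff_taylor {f : K[X]} {r : K} {n : ℕ} :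
    (X - C r) ^ n ∣ f ↔ ∀ j < n, (taylor r f).coeff j = 0 := by
  rw [X_sub_C_pow_dvd_iff, ← taylor_apply, Polynomial.X_pow_dvd_iff]

variable {l : K} {n D : ℕ} {F : Fin 4 → K[X]}

theorem eq_zero_of_sum_mul_curveMonomial_eq_zero (h0 : l ≠ 0) (h1 : l ≠ 1)
    (hF : ∀ i, (F i).natDegree < n) (h : ∑ i, F i * curveMonomial l n i = 0) {i : Fin 4}
    (hi : F i = 0) : F = 0 := by
  simp only [Fin.sum_univ_four, curveMonomial, Matrix.cons_val] at h
  have hF0 : F 0 = 0 ∧ F 1 = 0 ∧ F 2 = 0 ∧ F 3 = 0 := by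
    by_cases h01 : F 0 = 0 ∨ F 1 = 0
    · exact eq_zero_of_curve_relation h0 h1 (hF 0) (hF 1) (hF 2) (by linear_combination h) h01
    · have h23 : F 2 = 0 ∨ F 3 = 0 := by fin_cases i <;> simp_all
      obtain ⟨hF2, hF3, hF0, hF1⟩ := eq_zero_of_curve_relation one_ne_zero h1.symm (hF 2) (hF 3)
        (hF 0) (d := F 1) (by linear_combination h) h23
      exact ⟨hF0, hF1, hF2, hF3⟩
  funext j
  fin_cases j
  exacts [hF0.1, hF0.2.1, hF0.2.2.1, hF0.2.2.2]

theorem pow_dvd_wronskianDet_curveMonomial (h : ∑ i, F i * curveMonomial l n i = 0) {p : K}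
    (hp : p = 0 ∨ p = 1 ∨ p = l) :
    (X - C p) ^ (2 * (n - 2)) ∣ wronskianDet ![F 0 * curveMonomial l n 0,
      F 1 * curveMonomial l n 1, F 2 * curveMonomial l n 2] := by
  simp only [Fin.sum_univ_four, curveMonomial, Matrix.cons_val] at h ⊢
  have sq_dvd {a b c : K[X]} (hb : (X - C p) ^ n ∣ b) (hc : (X - C p) ^ n ∣ c) :
      (X - C p) ^ (2 * (n - 2)) ∣ wronskianDet ![a, b, c] := by
    simpa [Fin.prod_univ_three, two_mul, pow_add] using
      prod_pow_dvd_wronskianDet (f := ![a, b, c]) (e := ![0, n, n]) (r := X - C p)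
        (by intro j; fin_cases j <;> simp [hb, hc])
  -- At each of the three points two of the four summands of `h` vanish to order `n`,
  -- and the Wronskian of any three of the four agrees up to sign.
  rcases hp with rfl | rfl | rfl
  · rw [← dvd_neg]
    convert sq_dvd (a := F 0 * (X - C 1) ^ n) (b := F 1 * (X ^ n * (X - C 1) ^ n))
      (c := F 3 * (X ^ n * (X - C l) ^ n)) _ _ using 1
    · rw [eq_neg_of_add_eq_zero_right h]
      simp only [wronskianDet_three, derivative_add, derivative_neg]
      ring
    · rw [map_zero, sub_zero]; exact ⟨F 1 * (X - C 1) ^ n, by ring⟩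
    · rw [map_zero, sub_zero]; exact ⟨F 3 * (X - C l) ^ n, by ring⟩
  · convert sq_dvd (a := F 2 * (X - C l) ^ n) (b := F 0 * (X - C 1) ^ n)
      (c := F 1 * (X ^ n * (X - C 1) ^ n)) (dvd_mul_left _ _) _ using 1
    · simp only [wronskianDet_three]
      ring
    · exact ⟨F 1 * X ^ n, by ring⟩
  · convert sq_dvd (a := F 0 * (X - C 1) ^ n) (b := F 2 * (X - C p) ^ n)
      (c := F 3 * (X ^ n * (X - C p) ^ n)) (dvd_mul_left _ _) _ using 1
    · rw [eq_neg_of_add_eq_zero_right h]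
      simp only [wronskianDet_three, derivative_add, derivative_neg]
      ring
    · exact ⟨F 3 * X ^ n, by ring⟩

theorem natDegree_wronskianDet_curveMonomial_le (hF : ∀ i, (F i).natDegree ≤ D) :
    (wronskianDet ![F 0 * curveMonomial l n 0, F 1 * curveMonomial l n 1,
      F 2 * curveMonomial l n 2]).natDegree ≤ 3 * D + 4 * n := by
  refine (natDegree_wronskianDet_le (d := ![D + n, D + (n + n), D + n]) fun j => ?_).trans
    (by simp [Fin.sum_univ_three]; lia)
  have hpow (p : K) : ((X - C p) ^ n).natDegree ≤ n := (natDegree_X_sub_C_pow p n).le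
  fin_cases j
  · exact natDegree_mul_le_of_le (hF 0) (hpow 1)
  · exact natDegree_mul_le_of_le (hF 1) (natDegree_mul_le_of_le (natDegree_X_pow_le n) (hpow 1))
  · exact natDegree_mul_le_of_le (hF 2) (hpow l)

variable [CharZero K]

theorem wronskianDet_curveMonomial_ne_zero (h0 : l ≠ 0) (h1 : l ≠ 1)
    (hF : ∀ i, (F i).natDegree < n) (h : ∑ i, F i * curveMonomial l n i = 0) (hne : F ≠ 0) :
    wronskianDet ![F 0 * curveMonomial l n 0, F 1 * curveMonomial l n 1,
      F 2 * curveMonomial l n 2] ≠ 0 := by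
  intro hW
  have hF_ne (i) : F i ≠ 0 := fun hi =>
    hne (eq_zero_of_sum_mul_curveMonomial_eq_zero h0 h1 hF h hi)
  obtain ⟨α, β, γ, hαβγ, hrel⟩ := exists_linear_relation_of_wronskianDet_eq_zero hW
  have hG : ![C α * F 0, C β * F 1, C γ * F 2, 0] = 0 := by
    refine eq_zero_of_sum_mul_curveMonomial_eq_zero h0 h1 (n := n) (fun i => ?_) ?_ (i := 3) rfl
    · fin_cases i
      · exact (natDegree_C_mul_le _ _).trans_lt (hF 0)
      · exact (natDegree_C_mul_le _ _).trans_lt (hF 1)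
      · exact (natDegree_C_mul_le _ _).trans_lt (hF 2)
      · exact (Nat.zero_le _).trans_lt (hF 0)
    · simp only [Fin.sum_univ_four, Matrix.cons_val]
      linear_combination hrel
  have hα := congrFun hG 0
  have hβ := congrFun hG 1
  have hγ := congrFun hG 2
  simp only [Matrix.cons_val_zero, Matrix.cons_val_one, Matrix.cons_val, Pi.zero_apply,
    mul_eq_zero, map_eq_zero, hF_ne, or_false] at hα hβ hγ
  tauto

theorem zero_estimate (h0 : l ≠ 0) (h1 : l ≠ 1) (hD : D < n) (hF : ∀ i, (F i).natDegree ≤ D)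
    (h : ∑ i, F i * curveMonomial l n i = 0) (hne : F ≠ 0) {r : K} (hr0 : r ≠ 0) (hr1 : r ≠ 1)
    (hrl : r ≠ l) {J : ℕ} (hJ : (X - C r) ^ J ∣ wronskianDet ![F 0 * curveMonomial l n 0,
      F 1 * curveMonomial l n 1, F 2 * curveMonomial l n 2]) :
    6 * (n - 2) + J ≤ 3 * D + 4 * n := by
  have h01 := (isCoprime_X_sub_C_pow zero_ne_one (2 * (n - 2)) (2 * (n - 2))).mul_dvd
    (pow_dvd_wronskianDet_curveMonomial h (.inl rfl))
    (pow_dvd_wronskianDet_curveMonomial h (.inr (.inl rfl)))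
  have h01l := ((isCoprime_X_sub_C_pow h0.symm _ _).mul_left
    (isCoprime_X_sub_C_pow h1.symm _ _)).mul_dvd h01
    (pow_dvd_wronskianDet_curveMonomial h (.inr (.inr rfl)))
  have h01lr := (((isCoprime_X_sub_C_pow hr0.symm _ _).mul_left
    (isCoprime_X_sub_C_pow hr1.symm _ _)).mul_left
    (isCoprime_X_sub_C_pow hrl.symm _ _)).mul_dvd h01l hJ
  have hdegree := natDegree_le_of_dvd h01lr
    (wronskianDet_curveMonomial_ne_zero h0 h1 (fun i => (hF i).trans_lt hD) h hne)
  have hpow (p : K) (m : ℕ) : (X - C p) ^ m ≠ 0 := pow_ne_zero _ (X_sub_C_ne_zero p)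
  rw [natDegree_mul (mul_ne_zero (mul_ne_zero (hpow _ _) (hpow _ _)) (hpow _ _)) (hpow _ _),
    natDegree_mul (mul_ne_zero (hpow _ _) (hpow _ _)) (hpow _ _),
    natDegree_mul (hpow _ _) (hpow _ _)] at hdegree
  simp only [natDegree_X_sub_C_pow] at hdegree
  have := hdegree.trans (natDegree_wronskianDet_curveMonomial_le hF)
  lia

theorem exists_taylor_coeff_not_proportional (h0 : l ≠ 0) (h1 : l ≠ 1) {k : ℕ} (hk : 0 < k)
    (hF : ∀ i, (F i).natDegree ≤ 7 * k) (h : ∑ i, F i * curveMonomial l (10 * k) i = 0)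
    (hne : F ≠ 0) {r : K} (hr0 : r ≠ 0) (hr1 : r ≠ 1) (hrl : r ≠ l) {c : Fin 4 → K}
    (hc : c 0 ≠ 0) :
    ∃ j ≤ k + 14,
      ¬ ∃ μ, ∀ i, (taylor r (F i * curveMonomial l (10 * k) i)).coeff j = μ * c i := by
  by_contra! hprop
  set g : Fin 4 → K[X] := fun i => F i * curveMonomial l (10 * k) i
  have hdvd : (X - C r) ^ (k + 15) ∣ C (c 0) * g 1 - C (c 1) * g 0 := by
    refine X_sub_C_pow_dvd_iff_forall_coeff_taylor.2 fun j hj => ?_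
    obtain ⟨μ, hμ⟩ := hprop j (by lia)
    rw [map_sub, taylor_mul _ _ (g 1), taylor_mul _ _ (g 0), taylor_C, taylor_C,
      Polynomial.coeff_sub, Polynomial.coeff_C_mul, Polynomial.coeff_C_mul, hμ 0, hμ 1]
    ring
  have hW : (X - C r) ^ (k + 13) ∣ C (c 0) * wronskianDet ![g 0, g 1, g 2] := by
    have := prod_pow_dvd_wronskianDet (f := ![g 0, C (c 0) * g 1 - C (c 1) * g 0, g 2])
      (e := ![0, k + 15, 0]) (r := X - C r) (by intro j; fin_cases j <;> simp [hdvd])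
    convert this using 1
    · simp [Fin.prod_univ_three]
    · simp only [wronskianDet_three, derivative_sub, derivative_C_mul]
      ring
  have := zero_estimate h0 h1 (by lia) hF h hne hr0 hr1 hrl
    ((isUnit_C.2 hc.isUnit).dvd_mul_left.1 hW)
  lia

end ZeroEstimate

section Siegel

/-- Size bounds for an integer polynomial in two variables, as used in Siegel's lemma: degree less
than `p` in the outer variable, less than `q` in the inner one, and coefficients at most `M`. -/
structure HasBoundedCoeffs (f : ℤ[X][X]) (p q : ℕ) (M : ℝ) : Prop where
  eq_zero : ∀ m l, p ≤ m ∨ q ≤ l → (f.coeff m).coeff l = 0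
  norm_le : ∀ m l, ‖(f.coeff m).coeff l‖ ≤ M

namespace HasBoundedCoeffs

variable {f : ℤ[X][X]} {p q : ℕ} {M : ℝ}

theorem mono (h : HasBoundedCoeffs f p q M) {p' q' : ℕ} (hp : p ≤ p') (hq : q ≤ q') :
    HasBoundedCoeffs f p' q' M :=
  ⟨fun m l hml => h.eq_zero m l (by lia), h.norm_le⟩

theorem nonneg (h : HasBoundedCoeffs f p q M) : 0 ≤ M :=
  (norm_nonneg _).trans (h.norm_le 0 0)

theorem X_pow_mul (h : HasBoundedCoeffs f p q M) (n : ℕ) :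
    HasBoundedCoeffs (X ^ n * f) (n + p) q M where
  eq_zero m l hml := by
    rw [coeff_X_pow_mul']
    split_ifs
    · exact h.eq_zero _ _ (by lia)
    · rfl
  norm_le m l := by
    rw [coeff_X_pow_mul']
    split_ifs
    · exact h.norm_le _ _
    · simpa using h.nonneg

theorem C_X_pow_mul (h : HasBoundedCoeffs f p q M) (n : ℕ) :
    HasBoundedCoeffs (C (X ^ n) * f) p (n + q) M where
  eq_zero m l hml := by
    rw [Polynomial.coeff_C_mul, coeff_X_pow_mul']
    split_ifs
    · exact h.eq_zero _ _ (by lia)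
    · rfl
  norm_le m l := by
    rw [Polynomial.coeff_C_mul, coeff_X_pow_mul']
    split_ifs
    · exact h.norm_le _ _
    · simpa using h.nonneg

theorem monomial_mul (h : HasBoundedCoeffs f p q M) (a b : ℕ) :
    HasBoundedCoeffs (monomial a (monomial b 1) * f) (a + p) (b + q) M := by
  have := (h.C_X_pow_mul b).X_pow_mul a
  rwa [← mul_assoc, Polynomial.X_pow_mul, Polynomial.C_mul_X_pow_eq_monomial,
    Polynomial.X_pow_eq_monomial] at this

theorem natDegree_lt (h : HasBoundedCoeffs f p q M) (hp : 0 < p) : f.natDegree < p := by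
  refine (natDegree_le_iff_coeff_eq_zero.2 fun m hm => ?_).trans_lt (Nat.pred_lt hp.ne')
  ext l
  exact h.eq_zero m l (.inl (Nat.le_of_pred_lt hm))

theorem natDegree_coeff_lt (h : HasBoundedCoeffs f p q M) (hq : 0 < q) (m : ℕ) :
    (f.coeff m).natDegree < q :=
  (natDegree_le_iff_coeff_eq_zero.2 fun l hl =>
    h.eq_zero m l (.inr (Nat.le_of_pred_lt hl))).trans_lt (Nat.pred_lt hq.ne')

end HasBoundedCoeffs

theorem hasBoundedCoeffs_X_sub_C_X_pow_pow (e n : ℕ) :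
    HasBoundedCoeffs ((X - C (X ^ e)) ^ n) (n + 1) (e * n + 1) (2 ^ n) := by
  have hcoeff (m l : ℕ) : (((X - C (X ^ e)) ^ n : ℤ[X][X]).coeff m).coeff l =
      if l = e * (n - m) then (-1) ^ (n - m) * (n.choose m : ℤ) else 0 := by
    rw [sub_eq_add_neg, ← map_neg C, coeff_X_add_C_pow, neg_pow, ← pow_mul]
    rw [show ((-1) ^ (n - m) * X ^ (e * (n - m)) * (n.choose m : ℤ[X]) : ℤ[X]) =
      C ((-1) ^ (n - m) * (n.choose m : ℤ)) * X ^ (e * (n - m)) by simp; ring]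
    exact coeff_C_mul_X_pow _ _ _
  refine ⟨fun m l hml => ?_, fun m l => ?_⟩
  · rw [hcoeff]
    split_ifs with hl
    · rcases hml with hm | hl'
      · rw [Nat.choose_eq_zero_of_lt hm, Nat.cast_zero, mul_zero]
      · have := Nat.mul_le_mul_left e (Nat.sub_le n m)
        lia
    · rfl
  · rw [hcoeff]
    split_ifs
    · rw [norm_mul, norm_pow, norm_neg, norm_one, one_pow, one_mul, Int.norm_natCast]
      exact_mod_cast Nat.choose_le_two_pow n m
    · simp

theorem hasBoundedCoeffs_curveMonomial (n : ℕ) (i : Fin 4) :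
    HasBoundedCoeffs (curveMonomial X n i) (2 * n + 1) (n + 1) (2 ^ n) := by
  have h1 : HasBoundedCoeffs ((X - C 1) ^ n) (n + 1) (n + 1) (2 ^ n) := by
    simpa using (hasBoundedCoeffs_X_sub_C_X_pow_pow 0 n).mono le_rfl (by lia)
  have hX : HasBoundedCoeffs ((X - C X) ^ n) (n + 1) (n + 1) (2 ^ n) := by
    simpa using hasBoundedCoeffs_X_sub_C_X_pow_pow 1 n
  fin_cases i
  · exact h1.mono (by lia) le_rfl
  · exact (h1.X_pow_mul n).mono (by lia) le_rfl
  · exact hX.mono (by lia) le_rfl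
  · exact (hX.X_pow_mul n).mono (by lia) le_rfl

theorem coeff_coeff_sum_monomial {R : Type*} [Semiring R] {a b : ℕ} (t : Fin a × Fin b → R)
    (m l : ℕ) : ((∑ p, monomial (p.1 : ℕ) (monomial (p.2 : ℕ) (t p))).coeff m).coeff l =
      if h : m < a ∧ l < b then t (⟨m, h.1⟩, ⟨l, h.2⟩) else 0 := by
  have hterm (p : Fin a × Fin b) : ((monomial (p.1 : ℕ) (monomial (p.2 : ℕ) (t p))).coeff m).coeff l
      = if m = p.1 ∧ l = p.2 then t p else 0 := by
    simp only [Polynomial.coeff_monomial, apply_ite (fun f : R[X] => f.coeff l),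
      Polynomial.coeff_zero, ite_and, eq_comm (a := m), eq_comm (a := l)]
  simp only [finsetSum_coeff, hterm]
  split_ifs with h
  · rw [Finset.sum_eq_single (⟨m, h.1⟩, ⟨l, h.2⟩) (fun p _ hp => if_neg fun hml => hp ?_) (by simp)]
    · simp
    · exact Prod.ext (Fin.ext hml.1.symm) (Fin.ext hml.2.symm)
  · exact Finset.sum_eq_zero fun p _ => if_neg fun hml =>
      h ⟨hml.1.trans_lt p.1.2, hml.2.trans_lt p.2.2⟩

theorem coeff_coeff_sum_monomial_mul {R ι : Type*} [CommSemiring R] [Fintype ι] {a b : ℕ}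
    (t : ι × Fin a × Fin b → R) (V : ι → R[X][X]) (m l : ℕ) :
    ((∑ i, (∑ x, monomial (x.1 : ℕ) (monomial (x.2 : ℕ) (t (i, x)))) * V i).coeff m).coeff l =
      ∑ y : ι × Fin a × Fin b,
        ((monomial (y.2.1 : ℕ) (monomial (y.2.2 : ℕ) 1) * V y.1).coeff m).coeff l * t y := by
  have hterm (c : R) (x : Fin a × Fin b) (i : ι) :
      monomial (x.1 : ℕ) (monomial (x.2 : ℕ) c) * V i =
        C (C c) * (monomial (x.1 : ℕ) (monomial (x.2 : ℕ) 1) * V i) := by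
    rw [← mul_assoc, Polynomial.C_mul_monomial, Polynomial.C_mul_monomial, mul_one]
  rw [Fintype.sum_prod_type]
  simp only [Finset.sum_mul, hterm (t _), finsetSum_coeff, Polynomial.coeff_C_mul, mul_comm (t _)]

attribute [local instance] Matrix.seminormedAddCommGroup

theorem exists_hasBoundedCoeffs_sum_mul_eq_zero {ι : Type*} [Fintype ι] {V : ι → ℤ[X][X]}
    {p q a b : ℕ} {M : ℝ} (hM : 1 ≤ M) (hV : ∀ i, HasBoundedCoeffs (V i) p q M) (ha : 0 < a)
    (hb : 0 < b) (hcard : (a + p) * (b + q) < Fintype.card ι * (a * b)) :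
    ∃ F : ι → ℤ[X][X], F ≠ 0 ∧ ∑ i, F i * V i = 0 ∧ ∀ i, HasBoundedCoeffs (F i) a b
      ((Fintype.card ι * (a * b) * M) ^ (((a + p) * (b + q) : ℝ) /
        (Fintype.card ι * (a * b) - (a + p) * (b + q)))) := by
  let A : Matrix (Fin (a + p) × Fin (b + q)) (ι × Fin a × Fin b) ℤ := fun x y =>
    ((monomial (y.2.1 : ℕ) (monomial (y.2.2 : ℕ) 1) * V y.1).coeff x.1).coeff x.2
  have hprod (y : ι × Fin a × Fin b) : HasBoundedCoeffs
      (monomial (y.2.1 : ℕ) (monomial (y.2.2 : ℕ) 1) * V y.1) (a + p) (b + q) M :=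
    ((hV y.1).monomial_mul _ _).mono (by lia) (by lia)
  have hA : max 1 ‖A‖ ≤ M := max_le hM <| (Matrix.norm_le_iff (by linarith)).2 fun x y =>
    (hprod y).norm_le _ _
  obtain ⟨t, ht0, hAt, ht⟩ := Int.Matrix.exists_ne_zero_int_vec_norm_le A (by simpa using hcard)
    (by simp only [Fintype.card_prod, Fintype.card_fin, CanonicallyOrderedAdd.mul_pos]; lia)
  have hcard' : ((a + p) * (b + q) : ℝ) < Fintype.card ι * (a * b) := by exact_mod_cast hcard
  simp only [Fintype.card_prod, Fintype.card_fin, Nat.cast_mul, Nat.cast_add] at ht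
  refine ⟨fun i => ∑ x, monomial (x.1 : ℕ) (monomial (x.2 : ℕ) (t (i, x))), ?_, ?_, fun i => ?_⟩
  · refine fun hF => ht0 (funext fun ⟨i, x⟩ => ?_)
    have := coeff_coeff_sum_monomial (fun x => t (i, x)) x.1 x.2
    rw [congrFun hF i] at this
    simpa using this.symm
  · ext m l
    rw [coeff_coeff_sum_monomial_mul, Polynomial.coeff_zero, Polynomial.coeff_zero]
    by_cases hml : m < a + p ∧ l < b + q
    · refine Eq.trans ?_ (congrFun hAt (⟨m, hml.1⟩, ⟨l, hml.2⟩))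
      rfl
    · exact Finset.sum_eq_zero fun y _ => by rw [(hprod y).eq_zero m l (by lia), zero_mul]
  · refine ⟨fun m l hml => ?_, fun m l => ?_⟩
    · rw [coeff_coeff_sum_monomial, dif_neg (by lia)]
    · have hN : 0 ≤ (Fintype.card ι * (a * b) * M : ℝ) := by positivity
      rw [coeff_coeff_sum_monomial]
      split_ifs
      · refine (norm_le_pi_norm t _).trans (ht.trans ?_)
        gcongr
      · simpa using Real.rpow_nonneg hN _

theorem exists_hasBoundedCoeffs_curve_relation {k : ℕ} (hk : 0 < k) :
    ∃ F : Fin 4 → ℤ[X][X], F ≠ 0 ∧ ∑ i, F i * curveMonomial X (10 * k) i = 0 ∧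
      ∀ i, HasBoundedCoeffs (F i) (7 * k + 1) (500 * k) (2 ^ (1560 * k)) := by
  obtain ⟨F, hF0, hF, hbound⟩ := exists_hasBoundedCoeffs_sum_mul_eq_zero (a := 7 * k + 1)
    (b := 500 * k) (one_le_pow₀ one_le_two) (hasBoundedCoeffs_curveMonomial (10 * k)) (by lia)
    (by lia) (by rw [Fintype.card_fin]; nlinarith)
  refine ⟨F, hF0, hF, fun i => ⟨(hbound i).eq_zero, fun m l => ((hbound i).norm_le m l).trans ?_⟩⟩
  have hk1 : (1 : ℝ) ≤ k := by exact_mod_cast hk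
  push_cast [Fintype.card_fin]
  have hcount : (4 * ((7 * k + 1) * (500 * k)) : ℝ) ≤ 2 ^ (16 * k) := by
    have hk2 : (k : ℝ) ≤ 2 ^ k := by exact_mod_cast Nat.lt_two_pow_self.le
    calc (4 * ((7 * k + 1) * (500 * k)) : ℝ) ≤ 2 ^ 14 * (k * k) := by nlinarith
      _ ≤ 2 ^ (14 * k) * (2 ^ k * 2 ^ k) := by gcongr; exacts [one_le_two, by lia]
      _ = 2 ^ (16 * k) := by ring
  have hexponent : ((7 * k + 1 + (2 * (10 * k) + 1)) * (500 * k + (10 * k + 1)) : ℝ) /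
      (4 * ((7 * k + 1) * (500 * k)) -
        (7 * k + 1 + (2 * (10 * k) + 1)) * (500 * k + (10 * k + 1))) ≤ 60 := by
    rw [div_le_iff₀ (by nlinarith)]
    nlinarith
  calc _ ≤ (4 * ((7 * k + 1) * (500 * k)) * 2 ^ (10 * k) : ℝ) ^ (60 : ℝ) :=
        Real.rpow_le_rpow_of_exponent_le
          (one_le_mul_of_one_le_of_one_le (by nlinarith) (one_le_pow₀ one_le_two)) hexponent
    _ ≤ (2 ^ (16 * k) * 2 ^ (10 * k)) ^ (60 : ℝ) := by gcongr
    _ = 2 ^ (1560 * k) := by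
        rw [← pow_add, ← Nat.cast_ofNat (R := ℝ) (n := 60), Real.rpow_natCast, ← pow_mul]
        congr 1
        ring

end Siegel

section QuasiUltrametric

variable {R : Type*} [CommRing R]

/-- The triangle inequality with a multiplicative loss `κ`. It lets the places of a number field be
treated uniformly: `κ = 2` works for every absolute value, `κ = 1` for the nonarchimedean ones. -/
def IsQuasiUltrametric (v : AbsoluteValue R ℝ) (κ : ℝ) : Prop :=
  ∀ a b, v (a + b) ≤ κ * max (v a) (v b)

theorem isQuasiUltrametric_two (v : AbsoluteValue R ℝ) : IsQuasiUltrametric v 2 := fun a b => by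
  rw [two_mul]
  exact (v.add_le a b).trans (add_le_add (le_max_left _ _) (le_max_right _ _))

theorem isQuasiUltrametric_one {v : AbsoluteValue R ℝ} (hv : IsNonarchimedean v) :
    IsQuasiUltrametric v 1 := fun a b => by
  rw [one_mul]
  exact hv a b

namespace IsQuasiUltrametric

variable {v : AbsoluteValue R ℝ} {κ : ℝ}

theorem one_le [IsDomain R] (h : IsQuasiUltrametric v κ) : 1 ≤ κ := by
  simpa using h 1 0

theorem add_le_of_le [IsDomain R] (h : IsQuasiUltrametric v κ) {a b : R} {B : ℝ} (ha : v a ≤ B)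
    (hb : v b ≤ B) : v (a + b) ≤ κ * B :=
  (h a b).trans (mul_le_mul_of_nonneg_left (max_le ha hb) (zero_le_one.trans h.one_le))

theorem sum_le [IsDomain R] (h : IsQuasiUltrametric v κ) {ι : Type*} {s : Finset ι} {f : ι → R}
    {B : ℝ} (hB : 0 ≤ B) (hf : ∀ i ∈ s, v (f i) ≤ B) : v (∑ i ∈ s, f i) ≤ κ ^ s.card * B := by
  induction s using Finset.induction_on with
  | empty => simpa using hB
  | insert a s ha ih =>
    rw [Finset.sum_insert ha, Finset.card_insert_of_notMem ha, pow_succ', mul_assoc]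
    rw [Finset.forall_mem_insert] at hf
    exact h.add_le_of_le (hf.1.trans (le_mul_of_one_le_left hB (one_le_pow₀ h.one_le))) (ih hf.2)

theorem natCast_le [IsDomain R] (h : IsQuasiUltrametric v κ) {m n : ℕ} (hn : n ≤ 2 ^ m) :
    v (n : R) ≤ κ ^ m := by
  induction m generalizing n with
  | zero =>
    have : n = 0 ∨ n = 1 := by lia
    rcases this with rfl | rfl <;> simp
  | succ m ih =>
    rw [show n = n / 2 + (n - n / 2) by lia, Nat.cast_add, pow_succ']
    exact h.add_le_of_le (ih (by lia)) (ih (by lia))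

theorem intCast_le [IsDomain R] (h : IsQuasiUltrametric v κ) {m : ℕ} {n : ℤ}
    (hn : ‖n‖ ≤ 2 ^ m) : v (n : R) ≤ κ ^ m := by
  have hnat : v (n.natAbs : R) ≤ κ ^ m := h.natCast_le (by
    rw [Int.norm_eq_abs, ← Int.cast_abs, Int.abs_eq_natAbs] at hn
    exact_mod_cast hn)
  rcases Int.natAbs_eq n with hn | hn
  · rwa [hn, Int.cast_natCast]
  · rwa [hn, Int.cast_neg, v.map_neg, Int.cast_natCast]

theorem coeff_taylor_map_le [IsDomain R] (h : IsQuasiUltrametric v κ) {f : ℤ[X]} {d m : ℕ}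
    (hd : f.natDegree < d) (hf : ∀ j, ‖f.coeff j‖ ≤ 2 ^ m) (k : ℕ) (l : R) :
    v ((taylor l (f.map (Int.castRingHom R))).coeff k) ≤ κ ^ (2 * d + m) * max (v l) 1 ^ d := by
  have hκ : 0 ≤ κ := zero_le_one.trans h.one_le
  have hterm (j : ℕ) (hj : j ∈ Finset.range d) :
      v (j.choose k * f.coeff j * l ^ (j - k)) ≤ κ ^ d * κ ^ m * max (v l) 1 ^ d := by
    have hj := Finset.mem_range.1 hj
    rw [v.map_mul, v.map_mul, v.map_pow]
    gcongr
    · exact h.natCast_le ((Nat.choose_le_two_pow j k).trans (Nat.pow_le_pow_right two_pos hj.le))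
    · exact h.intCast_le (hf j)
    · calc v l ^ (j - k) ≤ max (v l) 1 ^ (j - k) := by gcongr; exact le_max_left _ _
        _ ≤ max (v l) 1 ^ d := pow_le_pow_right₀ (le_max_right _ _) (by lia)
  have hsum : (taylor l (f.map (Int.castRingHom R))).coeff k =
      ∑ j ∈ Finset.range d, (j.choose k * f.coeff j * l ^ (j - k) : R) := by
    rw [taylor_coeff, hasseDeriv_apply,
      sum_over_range' _ (by simp) d (natDegree_map_le.trans_lt hd), eval_finsetSum]
    simp
  rw [hsum]
  refine (h.sum_le (by positivity) hterm).trans_eq ?_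
  rw [Finset.card_range]
  ring

end IsQuasiUltrametric

end QuasiUltrametric

section Specialization

variable {K : Type*} [Field K] [CharZero K]

-- Evaluating `F` at `l` in the inner variable may kill it; instead take the lowest nonvanishing
-- coefficient of the expansion of `F` around `l`.
theorem exists_specialization {ι : Type*} [Fintype ι] {F V : ι → ℤ[X][X]} (hF : F ≠ 0)
    (h : ∑ i, F i * V i = 0) (l : K) :
    ∃ (k : ℕ) (G : ι → K[X]), G ≠ 0 ∧ ∑ i, G i * (V i).map (Polynomial.aeval l).toRingHom = 0 ∧
      ∀ i j, (G i).coeff j = (taylor l (((F i).coeff j).map (Int.castRingHom K))).coeff k := by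
  let φ : ℤ[X] →+* K[X] := (taylorAlgHom l).toRingHom.comp (mapRingHom (Int.castRingHom K))
  have hφ : Function.Injective φ := fun f g hfg =>
    map_injective _ (RingHom.injective_int _) (taylor_injective l hfg)
  have hex : ∃ k, ∃ i j, (((F i).map φ).coeff j).coeff k ≠ 0 := by
    by_contra! hzero
    exact hF (funext fun i => map_injective φ hφ (by ext j k; simpa using hzero k i j))
  have hdvd (i) : C (X ^ Nat.find hex) ∣ (F i).map φ :=
    (Polynomial.C_dvd_iff_dvd_coeff _ _).2 fun j => Polynomial.X_pow_dvd_iff.2 fun k hk => by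
      by_contra hne
      exact Nat.find_min hex hk ⟨i, j, hne⟩
  choose F' hF' using hdvd
  have hcoeff (i j) : ((F' i).map (evalRingHom 0)).coeff j =
      (φ ((F i).coeff j)).coeff (Nat.find hex) := by
    rw [← Polynomial.coeff_map, hF' i, Polynomial.coeff_C_mul, coeff_X_pow_mul',
      if_pos le_rfl, Nat.sub_self, coeff_zero_eq_eval_zero, Polynomial.coeff_map, coe_evalRingHom]
  refine ⟨Nat.find hex, fun i => (F' i).map (evalRingHom 0), fun h0 => ?_, ?_, hcoeff⟩
  · obtain ⟨i, j, hne⟩ := Nat.find_spec hex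
    rw [Polynomial.coeff_map, ← hcoeff, congrFun h0 i] at hne
    exact hne rfl
  · have hrel : ∑ i, F' i * (V i).map φ = 0 := by
      refine mul_left_cancel₀ (a := C (X ^ Nat.find hex : K[X])) (by simp) ?_
      simp only [Finset.mul_sum, ← mul_assoc, ← hF']
      simpa [Polynomial.map_sum] using congrArg (Polynomial.map φ) h
    have hcomp : (evalRingHom 0).comp φ = (Polynomial.aeval l).toRingHom := by
      ext <;> simp [φ]
    simpa [Polynomial.map_sum, Polynomial.map_map, hcomp] using
      congrArg (Polynomial.map (evalRingHom 0)) hrel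

theorem exists_curve_relation (l : K) {k : ℕ} (hk : 0 < k) :
    ∃ G : Fin 4 → K[X], G ≠ 0 ∧ (∀ i, (G i).natDegree ≤ 7 * k) ∧
      ∑ i, G i * curveMonomial l (10 * k) i = 0 ∧
      ∀ (v : AbsoluteValue K ℝ) (κ : ℝ), IsQuasiUltrametric v κ → ∀ i j,
        v ((G i).coeff j) ≤ κ ^ (2560 * k) * max (v l) 1 ^ (500 * k) := by
  obtain ⟨F, hF, hrel, hbound⟩ := exists_hasBoundedCoeffs_curve_relation hk
  obtain ⟨m, G, hG, hGrel, hcoeff⟩ := exists_specialization hF hrel l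
  refine ⟨G, hG, fun i => ?_, ?_, fun v κ hv i j => ?_⟩
  · refine natDegree_le_iff_coeff_eq_zero.2 fun j hj => ?_
    rw [hcoeff, coeff_eq_zero_of_natDegree_lt (((hbound i).natDegree_lt (by lia)).trans_le hj),
      Polynomial.map_zero, map_zero, Polynomial.coeff_zero]
  · have hX : (Polynomial.aeval l).toRingHom (X : ℤ[X]) = l := aeval_X l
    simpa only [map_curveMonomial, hX] using hGrel
  · rw [hcoeff, show 2560 * k = 2 * (500 * k) + 1560 * k by ring]
    exact hv.coeff_taylor_map_le ((hbound i).natDegree_coeff_lt (by lia) j)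
      ((hbound i).norm_le j) m l

end Specialization

section TaylorGrowth

variable {K : Type*} [Field K] {v : AbsoluteValue K ℝ} {κ : ℝ} {x : K} {M L : ℝ} {f : K[X]}

/-- Geometric growth, with constant `L` and ratio `M`, of the Taylor coefficients of `f` at `x`. -/
def TaylorGrowth (v : AbsoluteValue K ℝ) (x : K) (M L : ℝ) (f : K[X]) : Prop :=
  ∀ j, v ((taylor x f).coeff j) ≤ L * M ^ j

theorem TaylorGrowth.one (hM : 0 ≤ M) : TaylorGrowth v x M 1 1 := fun j => by
  rw [taylor_one, map_one, Polynomial.coeff_one]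
  split_ifs with hj
  · simp [hj]
  · simpa using pow_nonneg hM j

theorem TaylorGrowth.X_sub_C_mul (hv : IsQuasiUltrametric v κ) (hL : 0 ≤ L) (hM : 0 ≤ M) {a : K}
    (ha : 1 ≤ v (x - a) * M) (hf : TaylorGrowth v x M L f) :
    TaylorGrowth v x M (κ * v (x - a) * L) ((X - C a) * f) := fun j => by
  have htaylor : taylor x ((X - C a) * f) = C (x - a) * taylor x f + X * taylor x f := by
    rw [taylor_mul, map_sub, taylor_X, taylor_C, map_sub]
    ring
  rw [htaylor, Polynomial.coeff_add, mul_assoc, mul_assoc]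
  refine hv.add_le_of_le ?_ ?_
  · rw [Polynomial.coeff_C_mul, v.map_mul]
    gcongr
    exact hf j
  · cases j with
    | zero =>
      rw [Polynomial.mul_coeff_zero, Polynomial.coeff_X_zero, zero_mul, v.map_zero]
      positivity
    | succ j =>
      rw [Polynomial.coeff_X_mul]
      calc v ((taylor x f).coeff j) ≤ 1 * (L * M ^ j) := by rw [one_mul]; exact hf j
        _ ≤ v (x - a) * M * (L * M ^ j) := by gcongr
        _ = v (x - a) * (L * M ^ (j + 1)) := by ring

theorem TaylorGrowth.X_sub_C_pow_mul (hv : IsQuasiUltrametric v κ) (hL : 0 ≤ L) (hM : 0 ≤ M)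
    {a : K} (ha : 1 ≤ v (x - a) * M) (hf : TaylorGrowth v x M L f) (n : ℕ) :
    TaylorGrowth v x M (κ ^ n * v (x - a) ^ n * L) ((X - C a) ^ n * f) := by
  have hκ : 0 ≤ κ := zero_le_one.trans hv.one_le
  induction n with
  | zero => simpa using hf
  | succ n ih =>
    rw [pow_succ' (X - C a), mul_assoc (X - C a)]
    convert ih.X_sub_C_mul hv (by positivity) hM ha using 1
    ring

theorem TaylorGrowth.mul_of_coeff_le (hv : IsQuasiUltrametric v κ) (hL : 0 ≤ L) (hM : 0 ≤ M)
    (hx : 1 ≤ v x * M) (hf : TaylorGrowth v x M L f) {g : K[X]} {d : ℕ} {B : ℝ}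
    (hg : g.natDegree ≤ d) (hB : ∀ i, v (g.coeff i) ≤ B) :
    TaylorGrowth v x M (κ ^ (2 * d + 1) * B * max (v x) 1 ^ d * L) (g * f) := fun j => by
  have hκ : 0 ≤ κ := zero_le_one.trans hv.one_le
  have hB0 : 0 ≤ B := (v.nonneg _).trans (hB 0)
  have hterm (i : ℕ) (hi : i ∈ Finset.range (d + 1)) :
      v ((taylor x (C (g.coeff i) * (X ^ i * f))).coeff j) ≤
        B * (κ ^ d * max (v x) 1 ^ d * L * M ^ j) := by
    have hi := Finset.mem_range_succ_iff.1 hi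
    have hXi := hf.X_sub_C_pow_mul hv hL hM (a := 0) (by rwa [sub_zero]) i j
    rw [map_zero, sub_zero, sub_zero] at hXi
    rw [taylor_mul, taylor_C, Polynomial.coeff_C_mul, v.map_mul]
    gcongr
    · exact hB i
    · refine hXi.trans ?_
      gcongr
      · exact hv.one_le
      · calc v x ^ i ≤ max (v x) 1 ^ i := by gcongr; exact le_max_left _ _
          _ ≤ max (v x) 1 ^ d := pow_le_pow_right₀ (le_max_right _ _) hi
  have hsum : (taylor x (g * f)).coeff j =
      ∑ i ∈ Finset.range (d + 1), (taylor x (C (g.coeff i) * (X ^ i * f))).coeff j := by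
    conv_lhs => rw [g.as_sum_range_C_mul_X_pow' (Nat.lt_succ_of_le hg)]
    rw [Finset.sum_mul, map_sum, finsetSum_coeff]
    simp only [mul_assoc]
  rw [hsum]
  refine (hv.sum_le (by positivity) hterm).trans_eq ?_
  rw [Finset.card_range]
  ring

theorem taylorGrowth_curveMonomial (hv : IsQuasiUltrametric v κ) (hM : 0 ≤ M) {l : K}
    (h0 : 1 ≤ v x * M) (h1 : 1 ≤ v (x - 1) * M) (hl : 1 ≤ v (x - l) * M) (n : ℕ) (i : Fin 4) :
    TaylorGrowth v x M (κ ^ (2 * n) * v ((curveMonomial l n i).eval x)) (curveMonomial l n i) := by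
  have hκ : 1 ≤ κ ^ n := one_le_pow₀ hv.one_le
  have hpow {a : K} (ha : 1 ≤ v (x - a) * M) :
      TaylorGrowth v x M (κ ^ n * v (x - a) ^ n) ((X - C a) ^ n) := by
    simpa using (TaylorGrowth.one hM).X_sub_C_pow_mul hv zero_le_one hM ha n
  have hpow' {a : K} (ha : 1 ≤ v (x - a) * M) :
      TaylorGrowth v x M (κ ^ (2 * n) * v (x - a) ^ n) ((X - C a) ^ n) := fun j =>
    (hpow ha j).trans (by
      gcongr
      · exact hv.one_le
      · lia)
  have hX_mul {a : K} (ha : 1 ≤ v (x - a) * M) :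
      TaylorGrowth v x M (κ ^ (2 * n) * (v x ^ n * v (x - a) ^ n)) (X ^ n * (X - C a) ^ n) := by
    have := (hpow ha).X_sub_C_pow_mul hv (by positivity) hM (a := 0) (by rwa [sub_zero]) n
    rw [map_zero, sub_zero, sub_zero] at this
    convert this using 1
    ring
  fin_cases i
  · simpa [curveMonomial] using hpow' h1
  · simpa [curveMonomial] using hX_mul h1
  · simpa [curveMonomial] using hpow' hl
  · simpa [curveMonomial] using hX_mul hl

end TaylorGrowth

section ThueSiegel

variable {K : Type*} [Field K]

theorem IsQuasiUltrametric.sub_le {v : AbsoluteValue K ℝ} {κ : ℝ} (hv : IsQuasiUltrametric v κ)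
    (x a : K) : v (x - a) ≤ κ * (max (v x) 1 * max (v a) 1) := by
  rw [sub_eq_add_neg]
  refine hv.add_le_of_le ?_ ?_
  · exact (le_max_left _ _).trans (le_mul_of_one_le_right (by positivity) (le_max_right _ _))
  · rw [v.map_neg]
    exact (le_max_left _ _).trans (le_mul_of_one_le_left (by positivity) (le_max_right _ _))

theorem IsQuasiUltrametric.coeff_taylor_mul_curveMonomial_le {v : AbsoluteValue K ℝ} {κ : ℝ}
    (hv : IsQuasiUltrametric v κ) {l x : K} (hx0 : x ≠ 0) (hx1 : x ≠ 1) (hxl : x ≠ l)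
    {g : K[X]} {d : ℕ} {B : ℝ} (hg : g.natDegree ≤ d) (hB : ∀ i, v (g.coeff i) ≤ B) (n : ℕ)
    (i : Fin 4) {j J : ℕ} (hj : j ≤ J) :
    v ((x * (x - 1) * (x - l)) ^ j * (taylor x (g * curveMonomial l n i)).coeff j) ≤
      κ ^ (2 * d + 1 + 2 * n + 2 * J) * B * max (v x) 1 ^ (d + 2 * J) * max (v l) 1 ^ J *
        v ((curveMonomial l n i).eval x) := by
  have hκ := hv.one_le
  have hB0 : 0 ≤ B := (v.nonneg _).trans (hB 0)
  set N := κ ^ 2 * max (v x) 1 ^ 2 * max (v l) 1 with hN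
  have hN1 : 1 ≤ N := by
    refine one_le_mul_of_one_le_of_one_le (one_le_mul_of_one_le_of_one_le ?_ ?_) (le_max_right _ _)
    · exact one_le_pow₀ hκ
    · exact one_le_pow₀ (le_max_right _ _)
  have hx0' : 0 < v x := v.pos hx0
  have hx1' : 0 < v (x - 1) := v.pos (sub_ne_zero.2 hx1)
  have hxl' : 0 < v (x - l) := v.pos (sub_ne_zero.2 hxl)
  have h0 : v x ≤ κ * max (v x) 1 := by simpa using hv.sub_le x 0
  have h1 : v (x - 1) ≤ κ * max (v x) 1 := by simpa using hv.sub_le x 1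
  have hl := hv.sub_le x l
  have hprod {a b : ℝ} (hb0 : 0 ≤ b) (ha : a ≤ κ * max (v x) 1)
      (hb : b ≤ κ * (max (v x) 1 * max (v l) 1)) : a * b ≤ N :=
    (mul_le_mul ha hb hb0 (by positivity)).trans_eq (by ring)
  have h01 : v x * v (x - 1) ≤ N := hprod hx1'.le h0
    (h1.trans (by gcongr; exact le_mul_of_one_le_right (by positivity) (le_max_right _ _)))
  set M := N / (v x * v (x - 1) * v (x - l))
  have hM {u : ℝ} (hu : v x * v (x - 1) * v (x - l) ≤ u * N) : 1 ≤ u * M := by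
    rwa [mul_div_assoc', le_div_iff₀ (by positivity), one_mul]
  have h0M : 1 ≤ v x * M := hM (by nlinarith [hprod hxl'.le h1 hl])
  have h1M : 1 ≤ v (x - 1) * M := hM (by nlinarith [hprod hxl'.le h0 hl])
  have hlM : 1 ≤ v (x - l) * M := hM (by nlinarith)
  have hM0 : 0 ≤ M := by positivity
  have hgrowth := (taylorGrowth_curveMonomial hv hM0 h0M h1M hlM n i).mul_of_coeff_le hv
    (by positivity) hM0 h0M hg hB j
  rw [v.map_mul, v.map_pow, v.map_mul, v.map_mul]
  calc _ ≤ (v x * v (x - 1) * v (x - l)) ^ j * _ :=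
        mul_le_mul_of_nonneg_left hgrowth (by positivity)
    _ = κ ^ (2 * d + 1 + 2 * n) * B * max (v x) 1 ^ d * v ((curveMonomial l n i).eval x) *
        N ^ j := by
      rw [div_pow]
      field_simp
      ring
    _ ≤ κ ^ (2 * d + 1 + 2 * n) * B * max (v x) 1 ^ d * v ((curveMonomial l n i).eval x) *
        N ^ J := by gcongr
    _ = _ := by rw [hN]; ring

theorem eval_curveMonomial_ne_zero {l x : K} (hx0 : x ≠ 0) (hx1 : x ≠ 1) (hxl : x ≠ l) (n : ℕ)
    (i : Fin 4) : (curveMonomial l n i).eval x ≠ 0 := by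
  have := sub_ne_zero.2 hx1
  have := sub_ne_zero.2 hxl
  fin_cases i <;> simp [curveMonomial, *]

theorem exists_auxiliary_vector [CharZero K] {l x : K} (h0 : l ≠ 0) (h1 : l ≠ 1) {k : ℕ}
    (hk : 0 < k) (hx0 : x ≠ 0) (hx1 : x ≠ 1) (hxl : x ≠ l) {c : Fin 4 → K} (hc : c 0 ≠ 0) :
    ∃ E : Fin 4 → K, ∑ i, E i * (curveMonomial l (10 * k) i).eval x = 0 ∧
      (¬ ∃ μ, ∀ i, E i = μ * c i) ∧
      ∀ (v : AbsoluteValue K ℝ) (κ : ℝ), IsQuasiUltrametric v κ → ∀ i,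
        v (E i) ≤ κ ^ (2596 * k + 29) * max (v x) 1 ^ (9 * k + 28) *
          max (v l) 1 ^ (501 * k + 14) := by
  obtain ⟨G, hG0, hGdegree, hG, hGbound⟩ := exists_curve_relation l hk
  have hV := eval_curveMonomial_ne_zero hx0 hx1 hxl (10 * k)
  obtain ⟨j, hj, hindep⟩ := exists_taylor_coeff_not_proportional h0 h1 hk hGdegree hG hG0 hx0 hx1
    hxl (c := fun i => (curveMonomial l (10 * k) i).eval x * c i) (mul_ne_zero (hV 0) hc)
  have hD : (x * (x - 1) * (x - l)) ^ j ≠ 0 :=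
    pow_ne_zero _ (mul_ne_zero (mul_ne_zero hx0 (sub_ne_zero.2 hx1)) (sub_ne_zero.2 hxl))
  refine ⟨fun i => (x * (x - 1) * (x - l)) ^ j *
    (taylor x (G i * curveMonomial l (10 * k) i)).coeff j / (curveMonomial l (10 * k) i).eval x,
    ?_, ?_, fun v κ hv i => ?_⟩
  · simp_rw [div_mul_cancel₀ _ (hV _), ← Finset.mul_sum]
    rw [← finsetSum_coeff, ← map_sum, hG, map_zero, Polynomial.coeff_zero, mul_zero]
  · rintro ⟨μ, hμ⟩
    refine hindep ⟨μ / (x * (x - 1) * (x - l)) ^ j, fun i => ?_⟩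
    have := (div_eq_iff (hV i)).1 (hμ i)
    rw [div_mul_eq_mul_div, eq_div_iff hD]
    linear_combination this
  · rw [map_div₀, div_le_iff₀ (v.pos (hV i))]
    refine (hv.coeff_taylor_mul_curveMonomial_le hx0 hx1 hxl (hGdegree i) (hGbound v κ hv i) _ i
      hj).trans_eq ?_
    ring

theorem logHeight₁_le_of_isQuasiUltrametric [AdmissibleAbsValues K] {ι : Type*} [Fintype ι]
    {x A : K} (hA : A ≠ 0) (N : ℕ) (a : ι → K) (e : ι → ℕ)
    (h : ∀ (v : AbsoluteValue K ℝ) (κ : ℝ), IsQuasiUltrametric v κ →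
      max (v x) 1 * v A ≤ κ ^ N * ∏ i, max (v (a i)) 1 ^ e i) :
    logHeight₁ x ≤ totalWeight K * N + ∑ i, e i * logHeight₁ (a i) := by
  refine (logHeight₁_le_of_absVal_le hA (pow_pos two_pos N) a e
    (fun v _ => h v 2 (isQuasiUltrametric_two v))
    fun v hv => by simpa using h v 1 (isQuasiUltrametric_one (isNonarchimedean v hv))).trans ?_
  have hlog : Real.log 2 ≤ 1 := (Real.log_two_lt_d9.trans (by norm_num)).le
  rw [Real.log_pow]
  gcongr
  exact mul_le_of_le_one_right (by positivity) hlog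

theorem IsQuasiUltrametric.max_mul_le_of_quadratic {v : AbsoluteValue K ℝ} {κ R : ℝ}
    (hv : IsQuasiUltrametric v κ) {A B D x : K} (h : A * x ^ 2 + B * x + D = 0) (hA : v A ≤ R)
    (hB : v B ≤ R) (hD : v D ≤ R) : max (v x) 1 * v A ≤ κ * R := by
  have hR : 0 ≤ R := (v.nonneg _).trans hA
  have hκ := hv.one_le
  rcases le_or_gt (v x) 1 with hx | hx
  · rw [max_eq_right hx, one_mul]
    nlinarith
  · rw [max_eq_left hx.le]
    refine le_of_mul_le_mul_right ?_ (zero_lt_one.trans hx)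
    calc v x * v A * v x = v (B * x + D) := by
          rw [← v.map_mul, ← v.map_mul, ← v.map_neg]
          congr 1
          linear_combination -h
      _ ≤ κ * (R * v x) := hv.add_le_of_le (by rw [v.map_mul]; gcongr) (by nlinarith)
      _ = κ * R * v x := by ring

theorem logHeight₁_le_of_quadratic [AdmissibleAbsValues K] {ι : Type*} [Fintype ι]
    {A B D x : K} (hAB : A ≠ 0 ∨ B ≠ 0) (h : A * x ^ 2 + B * x + D = 0) (N : ℕ) (a : ι → K)
    (e : ι → ℕ) (hbound : ∀ (v : AbsoluteValue K ℝ) (κ : ℝ), IsQuasiUltrametric v κ →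
      ∀ z ∈ [A, B, D], v z ≤ κ ^ N * ∏ i, max (v (a i)) 1 ^ e i) :
    logHeight₁ x ≤ totalWeight K * (N + 1) + ∑ i, e i * logHeight₁ (a i) := by
  have key {L : K} (hL : L ≠ 0) (hbound_L : ∀ (v : AbsoluteValue K ℝ) (κ : ℝ),
      IsQuasiUltrametric v κ →
        max (v x) 1 * v L ≤ κ * (κ ^ N * ∏ i, max (v (a i)) 1 ^ e i)) :
      logHeight₁ x ≤ totalWeight K * (N + 1) + ∑ i, e i * logHeight₁ (a i) := by
    exact_mod_cast logHeight₁_le_of_isQuasiUltrametric hL (N + 1) a e fun v κ hv => by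
      rw [pow_succ', mul_assoc]
      exact hbound_L v κ hv
  by_cases hA : A = 0
  · have hlinear : B * x ^ 2 + D * x + 0 = 0 := by linear_combination x * h - x ^ 3 * hA
    refine key (hAB.resolve_left (not_not_intro hA)) fun v κ hv =>
      hv.max_mul_le_of_quadratic hlinear (hbound v κ hv B (by simp)) (hbound v κ hv D (by simp)) ?_
    rw [v.map_zero, ← v.map_zero, ← hA]
    exact hbound v κ hv A (by simp)
  · exact key hA fun v κ hv => hv.max_mul_le_of_quadratic h (hbound v κ hv A (by simp))
      (hbound v κ hv B (by simp)) (hbound v κ hv D (by simp))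

/-- The bilinear form `l - x - y + x * y` is, up to scaling, the only one that vanishes identically
on the curve `y * (x - 1) = x - l`. -/
theorem proportional_of_vanishes_on_curve {l : K} (hl : l ≠ 1) {b : Fin 4 → K}
    (h2 : b 1 + b 3 = 0) (h1 : b 0 - b 1 + b 2 - l * b 3 = 0) (h0 : b 0 + l * b 2 = 0) :
    ∃ μ, ∀ i, b i = μ * ![l, -1, -1, 1] i := by
  have h23 : b 2 + b 3 = 0 := by
    refine (mul_eq_zero.1 ?_).resolve_left (sub_ne_zero.2 hl.symm)
    linear_combination h1 + h2 - h0
  refine ⟨b 3, fun i => ?_⟩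
  fin_cases i <;> simp
  · linear_combination h0 - l * h23
  · linear_combination h2
  · linear_combination h23

theorem logHeight₁_le_of_bilinear_relation [AdmissibleAbsValues K] {ι : Type*} [Fintype ι]
    {l x y : K} (hl : l ≠ 1) (hxy : y * (x - 1) = x - l) {b : Fin 4 → K}
    (hrel : b 0 + b 1 * x + b 2 * y + b 3 * (x * y) = 0)
    (hb : ¬ ∃ μ, ∀ i, b i = μ * ![l, -1, -1, 1] i) (N : ℕ) (a : ι → K) (e : ι → ℕ)
    (hbound : ∀ (v : AbsoluteValue K ℝ) (κ : ℝ), IsQuasiUltrametric v κ →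
      ∀ i, max (v l) 1 * v (b i) ≤ κ ^ N * ∏ i, max (v (a i)) 1 ^ e i) :
    logHeight₁ x ≤ totalWeight K * (N + 3) + ∑ i, e i * logHeight₁ (a i) := by
  have hquadratic :
      (b 1 + b 3) * x ^ 2 + (b 0 - b 1 + b 2 - l * b 3) * x + -(b 0 + l * b 2) = 0 := by
    linear_combination (x - 1) * hrel - (b 2 + b 3 * x) * hxy
  have hne : b 1 + b 3 ≠ 0 ∨ b 0 - b 1 + b 2 - l * b 3 ≠ 0 := by
    by_contra! h
    rw [h.1, h.2] at hquadratic
    exact hb (proportional_of_vanishes_on_curve hl h.1 h.2 (by linear_combination -hquadratic))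
  have := logHeight₁_le_of_quadratic hne hquadratic (N + 2) a e fun v κ hv z hz => ?_
  · push_cast at this
    linarith
  set R := κ ^ N * ∏ i, max (v (a i)) 1 ^ e i
  have hκ := hv.one_le
  have hlb (i) : v (l * b i) ≤ R := by
    rw [v.map_mul]
    exact (mul_le_mul_of_nonneg_right (le_max_left _ _) (v.nonneg _)).trans (hbound v κ hv i)
  have hbR (i) : v (b i) ≤ R :=
    (le_mul_of_one_le_left (v.nonneg _) (le_max_right _ _)).trans (hbound v κ hv i)
  have hκR : κ * R ≤ κ * (κ * R) := le_mul_of_one_le_left (by positivity) hκ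
  have hgoal : κ ^ (N + 2) * ∏ i, max (v (a i)) 1 ^ e i = κ * (κ * R) := by ring
  rw [hgoal]
  simp only [List.mem_cons, List.not_mem_nil, or_false] at hz
  rcases hz with rfl | rfl | rfl
  · exact (hv.add_le_of_le (hbR 1) (hbR 3)).trans hκR
  · rw [show b 0 - b 1 + b 2 - l * b 3 = b 0 + -b 1 + (b 2 + -(l * b 3)) by ring]
    exact hv.add_le_of_le (hv.add_le_of_le (hbR 0) (by rw [v.map_neg]; exact hbR 1))
      (hv.add_le_of_le (hbR 2) (by rw [v.map_neg]; exact hlb 3))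
  · rw [v.map_neg]
    exact (hv.add_le_of_le (hbR 0) (hlb 2)).trans hκR

/-- Bombieri's form of the Thue–Siegel principle on the rational curve `y * (x - 1) = x - l`. -/
theorem thue_siegel_principle [CharZero K] [AdmissibleAbsValues K] {l x y x' y' t s : K}
    (h0 : l ≠ 0) (h1 : l ≠ 1) {k : ℕ} (hk : 0 < k) (hx0 : x ≠ 0) (hx1 : x ≠ 1) (hxl : x ≠ l)
    (hxy : y * (x - 1) = x - l) (hxy' : y' * (x' - 1) = x' - l) (ht : t ≠ 0) (hs : s ≠ 0)
    (hx' : x' = t * x ^ (10 * k)) (hy' : y' = s * y ^ (10 * k)) :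
    logHeight₁ x' ≤ totalWeight K * (2596 * k + 32) + (9 * k + 28) * logHeight₁ x +
      (501 * k + 15) * logHeight₁ l + logHeight₁ t + logHeight₁ s := by
  obtain ⟨E, hE, hEc, hbound⟩ := exists_auxiliary_vector h0 h1 hk hx0 hx1 hxl
    (c := ![l, -t, -s, t * s]) h0
  set w : Fin 4 → K := ![1, t⁻¹, s⁻¹, t⁻¹ * s⁻¹] with hw
  have hrel : E 0 * w 0 + E 1 * w 1 * x' + E 2 * w 2 * y' + E 3 * w 3 * (x' * y') = 0 := by
    refine (mul_eq_zero.1 ?_).resolve_left (pow_ne_zero (10 * k) (sub_ne_zero.2 hx1))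
    rw [Fin.sum_univ_four] at hE
    simp only [eval_curveMonomial hxy, bilinearMonomials, Matrix.cons_val] at hE
    simp only [hw, Matrix.cons_val, hx', hy']
    field_simp
    linear_combination hE
  have hindep : ¬ ∃ μ, ∀ i, E i * w i = μ * ![l, -1, -1, 1] i := by
    rintro ⟨μ, hμ⟩
    refine hEc ⟨μ, fun i => ?_⟩
    have := hμ i
    fin_cases i <;> simp [hw] at this ⊢ <;> field_simp at this <;> linear_combination this
  have key := logHeight₁_le_of_bilinear_relation h1 hxy' hrel hindep (2596 * k + 29)
    ![x, l, t⁻¹, s⁻¹] ![9 * k + 28, 501 * k + 15, 1, 1] fun v κ hv i => ?_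
  · simp only [Fin.sum_univ_four, Matrix.cons_val, logHeight₁_inv] at key
    push_cast at key
    linarith
  have hwi : v (w i) ≤ max (v t⁻¹) 1 * max (v s⁻¹) 1 := by
    have ht1 := le_max_right (v t⁻¹) 1
    have hs1 := le_max_right (v s⁻¹) 1
    fin_cases i
    · simpa [hw] using one_le_mul_of_one_le_of_one_le ht1 hs1
    · exact (le_max_left _ _).trans (le_mul_of_one_le_right (by positivity) hs1)
    · exact (le_max_left _ _).trans (le_mul_of_one_le_left (by positivity) ht1)
    · exact (v.map_mul _ _).trans_le (by gcongr <;> exact le_max_left _ _)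
  have hκ : 0 ≤ κ := zero_le_one.trans hv.one_le
  calc max (v l) 1 * v (E i * w i)
    _ ≤ max (v l) 1 * ((κ ^ (2596 * k + 29) * max (v x) 1 ^ (9 * k + 28) *
          max (v l) 1 ^ (501 * k + 14)) * (max (v t⁻¹) 1 * max (v s⁻¹) 1)) := by
      rw [v.map_mul]
      gcongr
      exact hbound v κ hv i
    _ = _ := by
      simp only [Fin.prod_univ_four, Matrix.cons_val]
      ring

end ThueSiegel

end AuxiliaryPolynomials

section ThreePoints

variable {K : Type*} [Field K]

theorem IsQuasiUltrametric.mul_sub_mul_le {v : AbsoluteValue K ℝ} {κ m n : ℝ}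
    (hv : IsQuasiUltrametric v κ) {a b c d : K} (ha : v a ≤ κ * m) (hb : v b ≤ κ * n)
    (hc : v c ≤ κ * m) (hd : v d ≤ κ * n) : v (a * b - c * d) ≤ κ ^ 3 * (m * n) := by
  have hm : 0 ≤ κ * m := (v.nonneg _).trans ha
  rw [sub_eq_add_neg, show κ ^ 3 * (m * n) = κ * ((κ * m) * (κ * n)) by ring]
  refine hv.add_le_of_le ?_ ?_
  · rw [v.map_mul]
    gcongr
  · rw [v.map_neg, v.map_mul]
    gcongr

theorem logHeight₁_add_sub_mul_le [AdmissibleAbsValues K] (x y : K) :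
    logHeight₁ (x + y - x * y) ≤ totalWeight K * 2 + logHeight₁ x + logHeight₁ y := by
  have := logHeight₁_le_of_isQuasiUltrametric (x := x + y - x * y) one_ne_zero 2 ![x, y] ![1, 1]
    fun v κ hv => ?_
  · simp only [Fin.sum_univ_two, Matrix.cons_val] at this
    push_cast at this
    linarith
  have hκ := hv.one_le
  have hx := le_max_right (v x) 1
  have hy := le_max_right (v y) 1
  have hxy : 1 ≤ max (v x) 1 * max (v y) 1 := one_le_mul_of_one_le_of_one_le hx hy
  simp only [v.map_one, mul_one, Fin.prod_univ_two, Matrix.cons_val, pow_one, pow_two, mul_assoc]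
  refine max_le ?_ (one_le_mul_of_one_le_of_one_le hκ (one_le_mul_of_one_le_of_one_le hκ hxy))
  rw [sub_eq_add_neg]
  refine hv.add_le_of_le (hv.add_le_of_le ?_ ?_) ?_
  · exact (le_max_left _ _).trans (le_mul_of_one_le_right (by positivity) hy)
  · exact (le_max_left _ _).trans (le_mul_of_one_le_left (by positivity) hx)
  · rw [v.map_neg, v.map_mul]
    refine le_trans ?_ (le_mul_of_one_le_left (by positivity) hκ)
    gcongr <;> exact le_max_left _ _

section Elimination

variable {l x y u w u' w' : K}

theorem curve_comm (h : y * (x - 1) = x - l) : x * (y - 1) = y - l := by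
  linear_combination h

theorem ne_one_of_mem_curve (hl : l ≠ 1) (h : y * (x - 1) = x - l) : x ≠ 1 := by
  rintro rfl
  exact hl (by linear_combination h)

/-- By differences of the three equations, the vector `(-x, -y, x * y)` is orthogonal to
`(u - 1, w - 1, u * w - 1)` and `(u' - 1, w' - 1, u' * w' - 1)`; then `x * y` is eliminated. -/
theorem linear_relation_of_three_points (hy : y ≠ 0) (h : y * (x - 1) = x - l)
    (h1 : (y * w) * (x * u - 1) = x * u - l) (h2 : (y * w') * (x * u' - 1) = x * u' - l) :
    ((u * w - 1) * (u' - 1) - (u - 1) * (u' * w' - 1)) * x +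
      ((u - 1) * (w' - 1) - (w - 1) * (u' - 1)) = 0 := by
  refine mul_left_cancel₀ hy ?_
  linear_combination (u' - 1) * (h1 - h) - (u - 1) * (h2 - h)

theorem linear_relation_ne_zero (hl : l ≠ 1) (hx : x ≠ 0) (hy : y ≠ 0) (h : y * (x - 1) = x - l)
    (h1 : (y * w) * (x * u - 1) = x * u - l) (h2 : (y * w') * (x * u' - 1) = x * u' - l)
    (hu : u ≠ 1) (hu' : u' ≠ 1) (huu' : u ≠ u') :
    (u * w - 1) * (u' - 1) - (u - 1) * (u' * w' - 1) ≠ 0 := by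
  intro hzero
  have hrel := linear_relation_of_three_points hy h h1 h2
  have hw : w ≠ 1 := by
    rintro rfl
    have := ne_one_of_mem_curve hl (curve_comm h)
    exact mul_ne_zero (mul_ne_zero hx (sub_ne_zero.2 hu)) (sub_ne_zero.2 this)
      (by linear_combination h1 - h)
  refine mul_ne_zero (mul_ne_zero (sub_ne_zero.2 hu') (sub_ne_zero.2 hw))
    (sub_ne_zero.2 huu'.symm) ?_
  refine (mul_eq_zero.1 ?_).resolve_left (sub_ne_zero.2 hu)
  rw [hzero] at hrel
  linear_combination (-(u' - 1) * (u - 1) - (u - 1)) * hrel - (u - 1) * hzero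

theorem logHeight₁_le_of_three_points [AdmissibleAbsValues K] (hl : l ≠ 1) (hx : x ≠ 0)
    (hy : y ≠ 0) (h : y * (x - 1) = x - l) (h1 : (y * w) * (x * u - 1) = x * u - l)
    (h2 : (y * w') * (x * u' - 1) = x * u' - l) (hu : u ≠ 1) (hu' : u' ≠ 1) (huu' : u ≠ u') :
    logHeight₁ x ≤
      totalWeight K * 4 + (logHeight₁ u + logHeight₁ w + (logHeight₁ u' + logHeight₁ w')) := by
  have hquadratic : (0 : K) * x ^ 2 + ((u * w - 1) * (u' - 1) - (u - 1) * (u' * w' - 1)) * x +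
      ((u - 1) * (w' - 1) - (w - 1) * (u' - 1)) = 0 := by
    linear_combination linear_relation_of_three_points hy h h1 h2
  have := logHeight₁_le_of_quadratic
    (.inr (linear_relation_ne_zero hl hx hy h h1 h2 hu hu' huu')) hquadratic 3
    ![u, w, u', w'] ![1, 1, 1, 1] fun v κ hv => ?_
  · simp only [Fin.sum_univ_four, Matrix.cons_val] at this
    push_cast at this
    linarith
  simp only [Fin.prod_univ_four, Matrix.cons_val, pow_one, mul_assoc (max (v u) 1 * max (v w) 1)]
  have sub_one_le (a b : K) {z : K} (hz : v z ≤ max (v a) 1 * max (v b) 1) :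
      v (z - 1) ≤ κ * (max (v a) 1 * max (v b) 1) := by
    rw [sub_eq_add_neg]
    refine hv.add_le_of_le hz ?_
    rw [v.map_neg, v.map_one]
    exact one_le_mul_of_one_le_of_one_le (le_max_right _ _) (le_max_right _ _)
  have hleft (a b : K) : v (a - 1) ≤ κ * (max (v a) 1 * max (v b) 1) := sub_one_le a b <|
    (le_max_left _ _).trans (le_mul_of_one_le_right (by positivity) (le_max_right _ _))
  have hright (a b : K) : v (b - 1) ≤ κ * (max (v a) 1 * max (v b) 1) := sub_one_le a b <|
    (le_max_left _ _).trans (le_mul_of_one_le_left (by positivity) (le_max_right _ _))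
  have hmul (a b : K) : v (a * b - 1) ≤ κ * (max (v a) 1 * max (v b) 1) := sub_one_le a b <| by
    rw [v.map_mul]
    gcongr <;> exact le_max_left _ _
  have hκ : 0 ≤ κ := zero_le_one.trans hv.one_le
  simp only [List.mem_cons, List.not_mem_nil, or_false, forall_eq_or_imp, forall_eq, v.map_zero]
  exact ⟨by positivity, hv.mul_sub_mul_le (hmul u w) (hleft u' w') (hleft u w) (hmul u' w'),
    hv.mul_sub_mul_le (hleft u w) (hright u' w') (hright u w) (hleft u' w')⟩

end Elimination

end ThreePoints

section FrobeniusDeterminant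

variable {n : Type*} [Fintype n] [DecidableEq n]

theorem prime_dvd_det_map_pow_sub {R : Type*} [CommRing R] (p : ℕ) [Fact p.Prime]
    (M : Matrix n n R) : (p : R) ∣ (M.map (· ^ p)).det - M.det ^ p := by
  by_cases hp : IsUnit (p : R)
  · exact hp.dvd
  have := CharP.quotient R p hp
  rw [← Ideal.mem_span_singleton, ← Ideal.Quotient.eq_zero_iff_mem, map_sub, map_pow,
    ← frobenius_def (R := R ⧸ Ideal.span {(p : R)}) p, RingHom.map_det, RingHom.map_det,
    RingHom.map_det, sub_eq_zero]
  congr 1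

variable {K : Type*} [Field K]

/-- The subring of elements of absolute value at most `1` for a nonarchimedean absolute value. -/
def closedUnitBall {v : AbsoluteValue K ℝ} (hv : IsNonarchimedean v) : Subring K where
  carrier := {x | v x ≤ 1}
  mul_mem' ha hb := (v.map_mul _ _).trans_le (mul_le_one₀ ha (v.nonneg _) hb)
  one_mem' := v.map_one.le
  add_mem' ha hb := (hv _ _).trans (max_le ha hb)
  zero_mem' := v.map_zero.trans_le zero_le_one
  neg_mem' ha := (v.map_neg _).trans_le ha

theorem absVal_det_map_pow_le_of_isNonarchimedean {v : AbsoluteValue K ℝ}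
    (hv : IsNonarchimedean v) (p : ℕ) [Fact p.Prime] {M : Matrix n n K}
    (hM : ∀ i j, v (M i j) ≤ 1) (hdet : M.det = 0) : v (M.map (· ^ p)).det ≤ v p := by
  obtain ⟨c, hc⟩ := prime_dvd_det_map_pow_sub p
    (Matrix.of fun i j => (⟨M i j, hM i j⟩ : closedUnitBall hv))
  have hdet_eq : (M.map (· ^ p)).det = p * c := by
    have := congrArg (closedUnitBall hv).subtype hc
    rw [map_sub, map_pow, RingHom.map_det, RingHom.map_det, map_mul, map_natCast] at this
    change (M.map (· ^ p)).det - M.det ^ p = _ at this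
    rwa [hdet, zero_pow (Fact.out : p.Prime).ne_zero, sub_zero] at this
  rw [hdet_eq, v.map_mul]
  exact mul_le_of_le_one_right (v.nonneg _) c.2

theorem absVal_det_map_pow_le_factorial (v : AbsoluteValue K ℝ) (p : ℕ) {M : Matrix n n K}
    (hM : ∀ i j, v (M i j) ≤ 1) : v (M.map (· ^ p)).det ≤ (Fintype.card n).factorial := by
  have := Matrix.det_le (A := M.map (· ^ p)) (abv := v) (x := 1) fun i j => by
    rw [Matrix.map_apply, v.map_pow]
    exact pow_le_one₀ (v.nonneg _) (hM i j)
  simpa using this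

/-- Scaling the rows reduces to matrices with entries in the unit ball. -/
theorem absVal_det_map_pow_le_mul_prod {v : AbsoluteValue K ℝ} {p : ℕ} {B : ℝ}
    (hB : ∀ M : Matrix n n K, (∀ i j, v (M i j) ≤ 1) → M.det = 0 → v (M.map (· ^ p)).det ≤ B)
    {M : Matrix n n K} {g : n → K} (hg : ∀ i, g i ≠ 0) (hM : ∀ i j, v (M i j) ≤ v (g i))
    (hdet : M.det = 0) : v (M.map (· ^ p)).det ≤ B * ∏ i, v (g i) ^ p := by
  set M' : Matrix n n K := Matrix.of fun i j => (g i)⁻¹ * M i j with hM'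
  have hscale : M.map (· ^ p) = Matrix.of fun i j => g i ^ p * M'.map (· ^ p) i j := by
    ext i j
    simp only [hM', Matrix.of_apply, Matrix.map_apply, ← mul_pow, mul_inv_cancel_left₀ (hg i)]
  rw [hscale, Matrix.det_mul_column, v.map_mul, map_prod, mul_comm]
  simp only [v.map_pow]
  refine mul_le_mul_of_nonneg_right (hB M' (fun i j => ?_) ?_)
    (Finset.prod_nonneg fun i _ => by positivity)
  · rw [hM', Matrix.of_apply, v.map_mul, map_inv₀, inv_mul_le_one₀ (v.pos (hg i))]
    exact hM i j
  · rw [hM', Matrix.det_mul_column, hdet, mul_zero]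

theorem exists_absVal_eq_max_one (v : AbsoluteValue K ℝ) (u : K) : ∃ c, v c = max (v u) 1 := by
  rcases le_total (v u) 1 with h | h
  · exact ⟨1, by rw [max_eq_right h, v.map_one]⟩
  · exact ⟨u, by rw [max_eq_left h]⟩

/-- The matrix whose rows are the bilinear monomials at the points `(u i, w i)`. -/
def bilinearMatrix (u w : Fin 4 → K) : Matrix (Fin 4) (Fin 4) K :=
  Matrix.of fun i => bilinearMonomials (u i) (w i)

theorem bilinearMatrix_map_pow (u w : Fin 4 → K) (p : ℕ) :
    (bilinearMatrix u w).map (· ^ p) = bilinearMatrix (u ^ p) (w ^ p) := by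
  ext i j
  fin_cases j <;> simp [bilinearMatrix, bilinearMonomials, mul_pow]

theorem absVal_bilinearMonomials_le (v : AbsoluteValue K ℝ) (u w : K) (j : Fin 4) :
    v (bilinearMonomials u w j) ≤ max (v u) 1 * max (v w) 1 := by
  have hu := le_max_right (v u) 1
  have hw := le_max_right (v w) 1
  fin_cases j
  · simpa [bilinearMonomials] using one_le_mul_of_one_le_of_one_le hu hw
  · exact (le_max_left _ _).trans (le_mul_of_one_le_right (by positivity) hw)
  · exact (le_max_left _ _).trans (le_mul_of_one_le_left (by positivity) hu)
  · exact (v.map_mul _ _).trans_le (by gcongr <;> exact le_max_left _ _)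

theorem absVal_det_bilinearMatrix_pow_le {v : AbsoluteValue K ℝ} {p : ℕ} {B : ℝ}
    (hB : ∀ M : Matrix (Fin 4) (Fin 4) K, (∀ i j, v (M i j) ≤ 1) → M.det = 0 →
      v (M.map (· ^ p)).det ≤ B) {u w : Fin 4 → K} (hdet : (bilinearMatrix u w).det = 0) :
    v (bilinearMatrix (u ^ p) (w ^ p)).det ≤
      B * ∏ i, max (v (Sum.elim u w i)) 1 ^ p := by
  choose c hc using exists_absVal_eq_max_one v
  have hg i : v (c (u i) * c (w i)) = max (v (u i)) 1 * max (v (w i)) 1 := by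
    rw [v.map_mul, hc, hc]
  have := absVal_det_map_pow_le_mul_prod hB (M := bilinearMatrix u w)
    (g := fun i => c (u i) * c (w i))
    (fun i => v.pos_iff.1 (by rw [hg]; positivity))
    (fun i j => (absVal_bilinearMonomials_le v _ _ j).trans_eq (hg i).symm) hdet
  simpa only [bilinearMatrix_map_pow, hg, mul_pow, Finset.prod_mul_distrib, Fintype.prod_sum_type,
    Sum.elim_inl, Sum.elim_inr] using this

variable [NumberField K]

theorem absVal_natCast_of_mem_archAbsVal {v : AbsoluteValue K ℝ} (hv : v ∈ archAbsVal (K := K))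
    (m : ℕ) : v m = m := by
  obtain ⟨φ, rfl⟩ := mem_multisetInfinitePlace.1 hv
  simp [place_apply]

/-- A determinant of `p`-th powers is divisible by `p` when the original determinant vanishes, so
by the product formula it vanishes too as soon as the entries are small. -/
theorem det_bilinearMatrix_pow_eq_zero {p : ℕ} [Fact p.Prime] {u w : Fin 4 → K}
    (hdet : (bilinearMatrix u w).det = 0)
    (hsmall : p * ∑ i, (logHeight₁ (u i) + logHeight₁ (w i)) <
      totalWeight K * Real.log (p / 24)) :
    (bilinearMatrix (u ^ p) (w ^ p)).det = 0 := by
  by_contra hne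
  have hp : 0 < p := (Fact.out : p.Prime).pos
  have hpK : (p : K) ≠ 0 := by exact_mod_cast hp.ne'
  have hscale {v : AbsoluteValue K ℝ} {B : ℝ}
      (h : v (bilinearMatrix (u ^ p) (w ^ p)).det ≤ B * ∏ i, max (v (Sum.elim u w i)) 1 ^ p) :
      max (v (0 : K)) 1 * v ((bilinearMatrix (u ^ p) (w ^ p)).det / p) ≤
        B / v p * ∏ i, max (v (Sum.elim u w i)) 1 ^ p := by
    rw [v.map_zero, max_eq_right zero_le_one, one_mul, map_div₀, div_mul_eq_mul_div]
    gcongr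
  have hheight := logHeight₁_le_of_absVal_le (x := (0 : K)) (div_ne_zero hne hpK)
    (C := 24 / p) (by positivity) (Sum.elim u w) (fun _ => p) (fun v hv => ?_) fun v hv => ?_
  · simp only [logHeight₁_zero, Fintype.sum_sum_type, Sum.elim_inl, Sum.elim_inr, ← Finset.mul_sum,
      ← Finset.sum_add_distrib] at hheight
    rw [← inv_div, Real.log_inv] at hheight
    linarith
  · rw [← absVal_natCast_of_mem_archAbsVal hv]
    refine hscale (absVal_det_bilinearMatrix_pow_le (fun M hM _ => ?_) hdet)
    simpa [Nat.factorial] using absVal_det_map_pow_le_factorial v p hM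
  · simpa [div_self (v.pos hpK).ne'] using hscale (absVal_det_bilinearMatrix_pow_le
      (fun M hM => absVal_det_map_pow_le_of_isNonarchimedean (isNonarchimedean v hv) p hM) hdet)

end FrobeniusDeterminant

section Cluster

open Polynomial
local notation "X" => Polynomial.X
local notation "C" => Polynomial.C

variable {K : Type*} [Field K]

theorem exists_dotProduct_eq_zero_of_det_eq_zero {ι : Type*} {n : ℕ} {r : ι → Fin n → K}
    (h : ∀ z : Fin n → ι, (Matrix.of fun i => r (z i)).det = 0) : ∃ c ≠ 0, ∀ i, c ⬝ᵥ r i = 0 := by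
  have hspan : Submodule.span K (Set.range r) < ⊤ := by
    refine lt_top_iff_ne_top.2 fun htop => ?_
    obtain ⟨f, hf, -, hli⟩ := Submodule.exists_fun_fin_finrank_span_eq K (Set.range r)
    have hn : Module.finrank K (Submodule.span K (Set.range r)) = n := by
      rw [htop, finrank_top, Module.finrank_fin_fun]
    choose z hz using hf
    have hli' : LinearIndependent K fun i => r (z (Fin.cast hn.symm i)) := by
      simp only [hz]
      exact hli.comp _ (Fin.cast_injective hn.symm)
    have := (Matrix.linearIndependent_rows_iff_isUnit (A := Matrix.of _)).1 hli'
    rw [Matrix.isUnit_iff_isUnit_det, h] at this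
    exact not_isUnit_zero this
  obtain ⟨φ, hφ, hker⟩ := Submodule.exists_le_ker_of_lt_top _ hspan
  refine ⟨(dotProductEquiv K (Fin n)).symm φ, by simpa using hφ, fun i => ?_⟩
  rw [← dotProductEquiv_apply_apply, LinearEquiv.apply_symm_apply]
  exact hker (Submodule.subset_span ⟨i, rfl⟩)

theorem natDegree_curveMonomial_le (l : K) (n : ℕ) (i : Fin 4) :
    (curveMonomial l n i).natDegree ≤ 2 * n := by
  have hX_mul (a : K) : (X ^ n * (X - C a) ^ n : K[X]).natDegree ≤ 2 * n :=
    natDegree_mul_le.trans (by rw [natDegree_X_pow, natDegree_X_sub_C_pow, two_mul])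
  fin_cases i
  · exact (natDegree_X_sub_C_pow 1 n).trans_le (by lia)
  · exact hX_mul 1
  · exact (natDegree_X_sub_C_pow l n).trans_le (by lia)
  · exact hX_mul l

theorem eq_zero_of_sum_C_mul_curveMonomial_eq_zero [CharZero K] {l : K} (h0 : l ≠ 0) (h1 : l ≠ 1)
    {n : ℕ} (hn : 6 < n) {c : Fin 4 → K} (h : ∑ i, C (c i) * curveMonomial l n i = 0) : c = 0 := by
  by_contra hc
  obtain ⟨r, hr⟩ := Infinite.exists_notMem_finset ({0, 1, l} : Finset K)
  simp only [Finset.mem_insert, Finset.mem_singleton, not_or] at hr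
  have hne : (fun i => C (c i)) ≠ 0 := fun h => hc (funext fun i => by simpa using congrFun h i)
  have := zero_estimate h0 h1 (D := 0) (by lia) (fun i => (natDegree_C _).le) h hne hr.1 hr.2.1
    hr.2.2 (J := 0) (by simp)
  lia

variable {l : K} {Z : Finset K} {y : K → K}

theorem card_le_of_sum_mul_bilinearMonomials_eq_zero [CharZero K] (h0 : l ≠ 0) (h1 : l ≠ 1)
    {n : ℕ} (hn : 6 < n) (hZ : ∀ x ∈ Z, y x * (x - 1) = x - l) {c : Fin 4 → K} (hc : c ≠ 0)
    (h : ∀ x ∈ Z, ∑ i, c i * bilinearMonomials (x ^ n) (y x ^ n) i = 0) : Z.card ≤ 2 * n := by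
  set P := ∑ i, C (c i) * curveMonomial l n i
  have hP : P ≠ 0 := mt (eq_zero_of_sum_C_mul_curveMonomial_eq_zero h0 h1 hn) hc
  have hdegree : P.natDegree ≤ 2 * n := natDegree_sum_le_of_forall_le _ _ fun i _ =>
    (natDegree_C_mul_le _ _).trans (natDegree_curveMonomial_le l n i)
  have hroots : Z.val ≤ P.roots := by
    refine (Multiset.le_iff_subset Z.nodup).2 fun x hx => ?_
    rw [mem_roots hP, IsRoot.def, eval_finsetSum]
    simp only [Polynomial.eval_mul, Polynomial.eval_C, eval_curveMonomial (hZ x hx)]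
    simp_rw [mul_left_comm _ ((x - 1) ^ n), ← Finset.mul_sum, h x hx, mul_zero]
  exact (Multiset.card_le_card hroots).trans ((card_roots' P).trans hdegree)

theorem det_bilinearMatrix_eq_zero_of_mem_curve (h0 : l ≠ 0) {c : K} (hc : c ≠ 0) (hyc : y c ≠ 0)
    {z : Fin 4 → K} (hz : ∀ i, y (z i) * (z i - 1) = z i - l) :
    (bilinearMatrix (fun i => z i / c) fun i => y (z i) / y c).det = 0 := by
  rw [← Matrix.exists_mulVec_eq_zero_iff]
  refine ⟨![l, -c, -y c, c * y c], fun h => h0 (by simpa using congrFun h 0), ?_⟩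
  ext i
  simp only [Matrix.mulVec, dotProduct, Fin.sum_univ_four, bilinearMatrix, bilinearMonomials,
    Matrix.of_apply, Matrix.cons_val, Pi.zero_apply]
  field_simp
  linear_combination hz i

theorem card_le_of_logHeight₁_div_le [NumberField K] (h0 : l ≠ 0) (h1 : l ≠ 1) {c : K} (hc : c ≠ 0)
    (hyc : y c ≠ 0) (hZ : ∀ x ∈ Z, y x * (x - 1) = x - l)
    (hsmall : ∀ x ∈ Z, logHeight₁ (x / c) + logHeight₁ (y x / y c) ≤ totalWeight K / 1000) :
    Z.card ≤ 58 := by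
  -- 29 is the least prime exceeding 4!, the archimedean bound for a 4 × 4 determinant.
  have : Fact (Nat.Prime 29) := ⟨by norm_num⟩
  obtain ⟨a, ha, hrel⟩ := exists_dotProduct_eq_zero_of_det_eq_zero
    (r := fun x : Z => bilinearMonomials ((x / c) ^ 29) ((y x / y c) ^ 29)) fun z => by
      refine det_bilinearMatrix_pow_eq_zero (p := 29) (det_bilinearMatrix_eq_zero_of_mem_curve h0 hc
        hyc (z := fun i => z i) fun i => hZ _ (z i).2) ?_
      have hsum := Finset.sum_le_sum fun i (_ : i ∈ Finset.univ) => hsmall _ (z i).2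
      have hlog := Real.one_sub_inv_le_log_of_pos (x := 29 / 24) (by norm_num)
      have htw : (0 : ℝ) < totalWeight K := by exact_mod_cast totalWeight_pos K
      simp only [Finset.sum_const, Finset.card_univ, Fintype.card_fin, nsmul_eq_mul] at hsum
      push_cast at hsum ⊢
      nlinarith
  have hg i : bilinearMonomials (c ^ 29) (y c ^ 29) i ≠ 0 := by
    fin_cases i <;> simp [bilinearMonomials, hc, hyc]
  refine card_le_of_sum_mul_bilinearMonomials_eq_zero h0 h1 (n := 29) (by norm_num) hZ
    (c := fun i => a i / bilinearMonomials (c ^ 29) (y c ^ 29) i) ?_ fun x hx => ?_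
  · exact fun h => ha (funext fun i => by simpa [hg i] using congrFun h i)
  · have := hrel ⟨x, hx⟩
    simp only [dotProduct, Fin.sum_univ_four, bilinearMonomials, Matrix.cons_val, div_pow] at this ⊢
    rw [← this]
    field_simp

end Cluster

section Families

variable {K : Type*} [Field K]

/-- The second coordinate of the point with first coordinate `x` on the curve
`y * (x - 1) = x - l`. -/
def ordinate (l x : K) : K := (x - l) / (x - 1)

theorem ordinate_mul_sub_one (l : K) {x : K} (hx : x ≠ 1) : ordinate l x * (x - 1) = x - l :=
  div_mul_cancel₀ _ (sub_ne_zero.2 hx)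

theorem logHeight₁_ordinate_le [AdmissibleAbsValues K] (l : K) {x : K} (hx : x ≠ 1) :
    logHeight₁ (ordinate l x) ≤ totalWeight K * 2 + logHeight₁ x + logHeight₁ l := by
  have hquadratic : 0 * ordinate l x ^ 2 + (x - 1) * ordinate l x + (l - x) = 0 := by
    linear_combination ordinate_mul_sub_one l hx
  have := logHeight₁_le_of_quadratic (.inr (sub_ne_zero.2 hx)) hquadratic 1 ![x, l] ![1, 1]
    fun v κ hv => ?_
  · simp only [Fin.sum_univ_two, Matrix.cons_val] at this
    push_cast at this
    linarith
  have hκ : 0 ≤ κ := zero_le_one.trans hv.one_le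
  have hl : 1 ≤ max (v l) 1 := le_max_right _ _
  have sub_one_le : v (x - 1) ≤ κ * (max (v x) 1 * max (v l) 1) := by
    refine (hv.sub_le x 1).trans ?_
    rw [v.map_one, max_self]
    gcongr
  simp only [Fin.prod_univ_two, Matrix.cons_val, pow_one, List.mem_cons, List.not_mem_nil, or_false,
    forall_eq_or_imp, forall_eq, v.map_zero]
  exact ⟨by positivity, sub_one_le, (v.map_sub l x).trans_le (hv.sub_le x l)⟩

variable [NumberField K] (T : Finset (HeightOneSpectrum (𝓞 K)))

/-- The logarithmic vectors of the two coordinates of the point with first coordinate `x` on the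
curve `y * (x - 1) = x - l`. -/
noncomputable def pointVector (l x : K) : WithLp 1 (LogSpace T × LogSpace T) :=
  WithLp.toLp 1 (logVector T x, logVector T (ordinate l x))

/-- A finite set of points of the curve `y * (x - 1) = x - l`, given by their first coordinates,
such that both coordinates are nonzero and have the same absolute value at all points of the set,
for each finite place outside `T`. -/
structure IsAgreeingFamily (l : K) (Z : Finset K) : Prop where
  parameter_ne_zero : l ≠ 0
  parameter_ne_one : l ≠ 1
  ne_zero : ∀ x ∈ Z, x ≠ 0
  ne_one : ∀ x ∈ Z, x ≠ 1
  ne_parameter : ∀ x ∈ Z, x ≠ l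
  agree : ∀ x ∈ Z, ∀ x' ∈ Z, AgreeOutside T x x'
  agree_ordinate : ∀ x ∈ Z, ∀ x' ∈ Z, AgreeOutside T (ordinate l x) (ordinate l x')

/-- The scale with respect to which heights of points of the curve `y * (x - 1) = x - l` are small
or large. -/
noncomputable def curveHeight (l : K) : ℝ := logHeight₁ l + totalWeight K

theorem cast_totalWeight_pos : (0 : ℝ) < totalWeight K := by
  exact_mod_cast totalWeight_pos K

theorem curveHeight_pos (l : K) : 0 < curveHeight l :=
  add_pos_of_nonneg_of_pos (zero_le_logHeight₁ l) cast_totalWeight_pos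

variable {T} {l a b c : K} {Z Z' : Finset K}

theorem finrank_pointSpace :
    finrank ℝ (WithLp 1 (LogSpace T × LogSpace T)) = 2 * sCard K T + 2 := by
  rw [(WithLp.linearEquiv 1 ℝ _).finrank_eq, finrank_prod, finrank_logSpace]
  lia

theorem norm_smul_sub_smul_le {E : Type*} [SeminormedAddCommGroup E] [NormedSpace ℝ E]
    (s t : ℝ) (p q : E) : ‖s • p - t • q‖ ≤ |s| * ‖p - q‖ + |s - t| * ‖q‖ := by
  rw [show s • p - t • q = s • (p - q) + (s - t) • q by module, ← Real.norm_eq_abs,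
    ← Real.norm_eq_abs, ← norm_smul, ← norm_smul]
  exact norm_add_le _ _

theorem packing_bounds_le_Cconst {s : ℕ} (hs : 1 ≤ s) :
    (58 * 240080001 ^ (2 * s + 2) + 12800002 * 2001 ^ (2 * s + 2) : ℝ) ≤ Cconst 3 s := by
  have hbase : (250000000 : ℝ) ≤ Real.exp 20 := by
    rw [show (20 : ℝ) = (20 : ℕ) by norm_num, ← Real.exp_one_pow]
    calc (250000000 : ℝ) ≤ 2.7 ^ 20 := by norm_num
      _ ≤ _ := by gcongr; linarith [Real.exp_one_gt_d9]
  have hs' : (1 : ℝ) ≤ s := by exact_mod_cast hs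
  calc (58 * 240080001 ^ (2 * s + 2) + 12800002 * 2001 ^ (2 * s + 2) : ℝ)
      ≤ 58 * 250000000 ^ (2 * s + 2) + 12800002 * 250000000 ^ (2 * s + 2) := by gcongr <;> norm_num
    _ ≤ 250000000 ^ (2 * s + 3) := by
        rw [← add_mul, pow_succ' _ (2 * s + 2)]
        gcongr
        norm_num
    _ ≤ 250000000 ^ (5 * s) := pow_le_pow_right₀ (by norm_num) (by lia)
    _ ≤ Real.exp 20 ^ (5 * s) := by gcongr
    _ = Real.exp (100 * s) := by rw [← Real.exp_nat_mul]; push_cast; ring_nf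
    _ ≤ Cconst 3 s := by
        rw [Cconst]
        gcongr
        · norm_num
        · push_cast
          linarith

namespace IsAgreeingFamily

theorem mono (h : IsAgreeingFamily T l Z) (hZ : Z' ⊆ Z) : IsAgreeingFamily T l Z' where
  parameter_ne_zero := h.parameter_ne_zero
  parameter_ne_one := h.parameter_ne_one
  ne_zero x hx := h.ne_zero x (hZ hx)
  ne_one x hx := h.ne_one x (hZ hx)
  ne_parameter x hx := h.ne_parameter x (hZ hx)
  agree x hx x' hx' := h.agree x (hZ hx) x' (hZ hx')
  agree_ordinate x hx x' hx' := h.agree_ordinate x (hZ hx) x' (hZ hx')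

variable (h : IsAgreeingFamily T l Z)
include h

theorem ordinate_ne_zero (ha : a ∈ Z) : ordinate l a ≠ 0 :=
  div_ne_zero (sub_ne_zero.2 (h.ne_parameter a ha)) (sub_ne_zero.2 (h.ne_one a ha))

theorem ordinate_mul_sub_one (ha : a ∈ Z) : ordinate l a * (a - 1) = a - l :=
  FourPoint.ordinate_mul_sub_one l (h.ne_one a ha)

theorem norm_pointVector_le (ha : a ∈ Z) :
    ‖pointVector T l a‖ ≤ 4 * logHeight₁ a + 4 * curveHeight l := by
  have := logHeight₁_ordinate_le l (h.ne_one a ha)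
  have := zero_le_logHeight₁ l
  rw [WithLp.prod_norm_eq_of_L1, curveHeight]
  change ‖logVector T a‖ + ‖logVector T (ordinate l a)‖ ≤ _
  rw [norm_logVector (h.ne_zero a ha), norm_logVector (h.ordinate_ne_zero ha)]
  linarith

theorem norm_pointVector_sub_smul (ha : a ∈ Z) (hc : c ∈ Z) {n : ℕ} (hn : 1 ≤ n) :
    ‖pointVector T l a - (n : ℝ) • pointVector T l c‖ =
      2 * (logHeight₁ (a / c ^ n) + logHeight₁ (ordinate l a / ordinate l c ^ n)) := by
  rw [WithLp.prod_norm_eq_of_L1, mul_add, ← (h.agree c hc a ha).norm_logVector_sub_smul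
    (h.ne_zero c hc) (h.ne_zero a ha) hn, ← (h.agree_ordinate c hc a ha).norm_logVector_sub_smul
    (h.ordinate_ne_zero hc) (h.ordinate_ne_zero ha) hn]
  rfl

theorem norm_pointVector_sub (ha : a ∈ Z) (hc : c ∈ Z) :
    ‖pointVector T l a - pointVector T l c‖ =
      2 * (logHeight₁ (a / c) + logHeight₁ (ordinate l a / ordinate l c)) := by
  simpa using h.norm_pointVector_sub_smul ha hc le_rfl

theorem ordinate_ne_ordinate (ha : a ∈ Z) (hb : b ∈ Z) (hab : a ≠ b) :
    ordinate l a ≠ ordinate l b := fun heq => by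
  refine mul_ne_zero (sub_ne_zero.2 hab) (sub_ne_zero.2 (ne_one_of_mem_curve h.parameter_ne_one
    (curve_comm (h.ordinate_mul_sub_one ha)))) ?_
  linear_combination h.ordinate_mul_sub_one ha - h.ordinate_mul_sub_one hb - (b - 1) * heq

theorem card_le_two {r : ℝ} (hc : c ∈ Z)
    (hr : ∀ x ∈ Z, ‖pointVector T l x - pointVector T l c‖ ≤ r)
    (hlarge : totalWeight K * 4 + r < logHeight₁ c ∨ totalWeight K * 10 + 2 * r < logHeight₁ l) :
    Z.card ≤ 2 := by
  by_contra! hcard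
  obtain ⟨a, b, ha, hb, hab⟩ := Finset.one_lt_card_iff.1
    (show 1 < (Z.erase c).card by rw [Finset.card_erase_of_mem hc]; lia)
  rw [Finset.mem_erase] at ha hb
  have har := (h.norm_pointVector_sub ha.2 hc).symm.trans_le (hr a ha.2)
  have hbr := (h.norm_pointVector_sub hb.2 hc).symm.trans_le (hr b hb.2)
  have hc0 := h.ne_zero c hc
  have hyc0 := h.ordinate_ne_zero hc
  have hcurve {x : K} (hx : x ∈ Z) : ordinate l c * (ordinate l x / ordinate l c) *
      (c * (x / c) - 1) = c * (x / c) - l := by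
    rw [mul_div_cancel₀ _ hc0, mul_div_cancel₀ _ hyc0, h.ordinate_mul_sub_one hx]
  have hheight_c := logHeight₁_le_of_three_points h.parameter_ne_one hc0 hyc0
    (h.ordinate_mul_sub_one hc) (hcurve ha.2) (hcurve hb.2) (mt (div_eq_one_iff_eq hc0).1 ha.1)
    (mt (div_eq_one_iff_eq hc0).1 hb.1) (mt (div_left_inj' hc0).1 hab)
  have hheight_yc := logHeight₁_le_of_three_points h.parameter_ne_one hyc0 hc0
    (curve_comm (h.ordinate_mul_sub_one hc)) (curve_comm (hcurve ha.2)) (curve_comm (hcurve hb.2))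
    (mt (div_eq_one_iff_eq hyc0).1 (h.ordinate_ne_ordinate ha.2 hc ha.1))
    (mt (div_eq_one_iff_eq hyc0).1 (h.ordinate_ne_ordinate hb.2 hc hb.1))
    (mt (div_left_inj' hyc0).1 (h.ordinate_ne_ordinate ha.2 hb.2 hab))
  have hheight_l := logHeight₁_add_sub_mul_le c (ordinate l c)
  rw [show c + ordinate l c - c * ordinate l c = l by
    linear_combination -h.ordinate_mul_sub_one hc] at hheight_l
  rcases hlarge with hlarge | hlarge <;> linarith

theorem card_le_of_norm_sub_lt (hc : c ∈ Z)
    (hr : ∀ x ∈ Z, ‖pointVector T l x - pointVector T l c‖ < curveHeight l / 10000) :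
    Z.card ≤ 58 := by
  have htw := cast_totalWeight_pos (K := K)
  rcases le_or_gt (logHeight₁ l) (11 * totalWeight K) with hl | hl
  · refine card_le_of_logHeight₁_div_le h.parameter_ne_zero h.parameter_ne_one (h.ne_zero c hc)
      (h.ordinate_ne_zero hc) (fun x hx => h.ordinate_mul_sub_one hx) fun x hx => ?_
    have := hr x hx
    rw [h.norm_pointVector_sub hx hc, curveHeight] at this
    linarith
  · refine (h.card_le_two hc (fun x hx => (hr x hx).le) (.inr ?_)).trans (by norm_num)
    rw [curveHeight]
    linarith

theorem card_le_of_logHeight₁_le (hsmall : ∀ x ∈ Z, logHeight₁ x ≤ 3000 * curveHeight l) :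
    (Z.card : ℝ) ≤ 58 * 240080001 ^ (2 * sCard K T + 2) := by
  have hH := curveHeight_pos l
  have := card_le_mul_of_ball_card_le (Z := Z) (f := pointVector T l) (R := 12004 * curveHeight l)
    (d := curveHeight l / 10000) (m := 58) (by positivity) (by positivity)
    (fun x hx => (h.norm_pointVector_le hx).trans (by linarith [hsmall x hx])) fun c hc =>
      (h.mono (Finset.filter_subset _ _)).card_le_of_norm_sub_lt
        (Finset.mem_filter.2 ⟨hc, by simpa using by positivity⟩)
        fun x hx => (Finset.mem_filter.1 hx).2
  rwa [finrank_pointSpace, show 1 + 2 * (12004 * curveHeight l) / (curveHeight l / 10000) =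
    240080001 by field_simp; norm_num, Nat.cast_ofNat] at this

theorem logHeight₁_le_of_pow (ha : a ∈ Z) (hb : b ∈ Z) {k : ℕ} (hk : 0 < k) :
    logHeight₁ b ≤ totalWeight K * (2596 * k + 32) + (9 * k + 28) * logHeight₁ a +
      (501 * k + 15) * logHeight₁ l +
      ‖pointVector T l b - (10 * k : ℝ) • pointVector T l a‖ / 2 := by
  have ha0 := h.ne_zero a ha
  have hya0 := h.ordinate_ne_zero ha
  have := thue_siegel_principle h.parameter_ne_zero h.parameter_ne_one hk ha0 (h.ne_one a ha)
    (h.ne_parameter a ha) (h.ordinate_mul_sub_one ha) (h.ordinate_mul_sub_one hb)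
    (div_ne_zero (h.ne_zero b hb) (pow_ne_zero (10 * k) ha0))
    (div_ne_zero (h.ordinate_ne_zero hb) (pow_ne_zero (10 * k) hya0))
    (by field_simp) (by field_simp)
  have hnorm := h.norm_pointVector_sub_smul hb ha (n := 10 * k) (by lia)
  push_cast at hnorm
  rw [hnorm]
  linarith

theorem norm_inv_smul_pointVector_le (ha : a ∈ Z) (hlarge : 3000 * curveHeight l < logHeight₁ a) :
    ‖(logHeight₁ a)⁻¹ • pointVector T l a‖ ≤ 5 := by
  have := curveHeight_pos l
  have := h.norm_pointVector_le ha
  rw [norm_smul, norm_inv, Real.norm_of_nonneg (by linarith), inv_mul_le_iff₀ (by linarith)]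
  linarith

theorem norm_smul_pointVector_sub_le (ha : a ∈ Z) (hlarge : 3000 * curveHeight l < logHeight₁ a)
    (hb : logHeight₁ b ≠ 0)
    (hclose : ‖(logHeight₁ b)⁻¹ • pointVector T l b - (logHeight₁ a)⁻¹ • pointVector T l a‖ ≤
      1 / 100) (t : ℝ) :
    ‖pointVector T l b - t • pointVector T l a‖ ≤
      logHeight₁ b / 100 + |logHeight₁ b - t * logHeight₁ a| * 5 := by
  have ha0 : logHeight₁ a ≠ 0 := by linarith [curveHeight_pos l]
  have := norm_smul_sub_smul_le (logHeight₁ b) (t * logHeight₁ a)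
    ((logHeight₁ b)⁻¹ • pointVector T l b) ((logHeight₁ a)⁻¹ • pointVector T l a)
  rw [mul_smul, smul_inv_smul₀ hb, smul_inv_smul₀ ha0, abs_of_nonneg (zero_le_logHeight₁ b)] at this
  refine this.trans ?_
  have := h.norm_inv_smul_pointVector_le ha hlarge
  have := zero_le_logHeight₁ b
  rw [div_eq_mul_one_div]
  gcongr

theorem logHeight₁_le_of_norm_inv_smul_sub_le (ha : a ∈ Z) (hb : b ∈ Z)
    (hlarge : 3000 * curveHeight l < logHeight₁ a)
    (hclose : ‖(logHeight₁ b)⁻¹ • pointVector T l b - (logHeight₁ a)⁻¹ • pointVector T l a‖ ≤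
      1 / 100) : logHeight₁ b ≤ 8000 * logHeight₁ a := by
  by_contra! hlt
  have htw := cast_totalWeight_pos (K := K)
  have hl := zero_le_logHeight₁ l
  have hA : 0 < logHeight₁ a := by linarith [curveHeight_pos l]
  set k := ⌊logHeight₁ b / (10 * logHeight₁ a)⌋₊
  have hfloor_le : k * (10 * logHeight₁ a) ≤ logHeight₁ b :=
    (le_div_iff₀ (by positivity)).1 (Nat.floor_le (by positivity))
  have hlt_floor : logHeight₁ b < (k + 1) * (10 * logHeight₁ a) :=
    (div_lt_iff₀ (by positivity)).1 (Nat.lt_floor_add_one _)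
  have hk800 : 800 ≤ k := Nat.le_floor <| by
    rw [le_div_iff₀ (by positivity)]
    push_cast
    linarith
  have hdist := h.norm_smul_pointVector_sub_le ha hlarge (by linarith) hclose (10 * k)
  rw [abs_of_nonneg (by linarith)] at hdist
  have hheight := h.logHeight₁_le_of_pow ha hb (k := k) (by lia)
  have hk800' : (800 : ℝ) ≤ k := by exact_mod_cast hk800
  have hcurve : totalWeight K * (2596 * k + 32) + (501 * k + 15) * logHeight₁ l ≤
      k * (2597 * curveHeight l) := by
    rw [curveHeight]
    nlinarith
  have hcurve_le : k * (3000 * curveHeight l) ≤ k * logHeight₁ a := by gcongr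
  nlinarith

theorem card_le_of_norm_inv_smul_sub_le (hlarge : ∀ x ∈ Z, 3000 * curveHeight l < logHeight₁ x)
    (hclose : ∀ a ∈ Z, ∀ b ∈ Z,
      ‖(logHeight₁ b)⁻¹ • pointVector T l b - (logHeight₁ a)⁻¹ • pointVector T l a‖ ≤ 1 / 100) :
    Z.card ≤ 12800002 := by
  rcases Z.eq_empty_or_nonempty with rfl | hne
  · simp
  have hH := curveHeight_pos l
  obtain ⟨m, hm, hmin⟩ := Z.exists_min_image logHeight₁ hne
  have hm0 : 0 < logHeight₁ m := by linarith [hlarge m hm]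
  have := card_le_mul_of_ball_card_le (Z := Z) (f := logHeight₁) (R := 8000 * logHeight₁ m)
    (d := logHeight₁ m / 400) (m := 2) (by positivity) (by positivity)
    (fun x hx => by
      rw [Real.norm_of_nonneg (zero_le_logHeight₁ x)]
      exact h.logHeight₁_le_of_norm_inv_smul_sub_le hm hx (hlarge m hm) (hclose m hm x hx))
    fun c hc => ?_
  · rw [finrank_self, pow_one, show 1 + 2 * (8000 * logHeight₁ m) / (logHeight₁ m / 400) =
      6400001 by field_simp; norm_num] at this
    norm_num at this
    exact_mod_cast this
  · refine (h.mono (Finset.filter_subset _ _)).card_le_two (c := c) (r := logHeight₁ c / 40)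
      (Finset.mem_filter.2 ⟨hc, by simpa using hm0⟩) (fun x hx => ?_) (.inl ?_)
    · obtain ⟨hxZ, hxc⟩ := Finset.mem_filter.1 hx
      have hx0 : 0 < logHeight₁ x := by linarith [hlarge x hxZ]
      have hdist := h.norm_smul_pointVector_sub_le hxZ (hlarge x hxZ) (by linarith [hlarge c hc])
        (hclose x hxZ c hc) 1
      rw [one_smul, one_mul, norm_sub_rev] at hdist
      rw [Real.norm_eq_abs, abs_sub_comm] at hxc
      linarith [hmin c hc]
    · have : totalWeight K ≤ curveHeight l := le_add_of_nonneg_left (zero_le_logHeight₁ l)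
      linarith [hlarge c hc]

theorem card_le_of_lt_logHeight₁ (hlarge : ∀ x ∈ Z, 3000 * curveHeight l < logHeight₁ x) :
    (Z.card : ℝ) ≤ 12800002 * 2001 ^ (2 * sCard K T + 2) := by
  have := card_le_mul_of_ball_card_le (Z := Z)
    (f := fun x => (logHeight₁ x)⁻¹ • pointVector T l x) (R := 5) (d := 1 / 200) (m := 12800002)
    (by norm_num) (by norm_num)
    (fun x hx => h.norm_inv_smul_pointVector_le hx (hlarge x hx)) fun c _ => ?_
  · rw [finrank_pointSpace] at this
    norm_num at this ⊢
    exact this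
  · refine (h.mono (Finset.filter_subset _ _)).card_le_of_norm_inv_smul_sub_le
      (fun x hx => hlarge x (Finset.mem_filter.1 hx).1) fun a ha b hb => ?_
    have hac := (Finset.mem_filter.1 ha).2
    have hbc := (Finset.mem_filter.1 hb).2
    rw [← dist_eq_norm] at hac hbc ⊢
    linarith [dist_triangle_right ((logHeight₁ b)⁻¹ • pointVector T l b)
      ((logHeight₁ a)⁻¹ • pointVector T l a) ((logHeight₁ c)⁻¹ • pointVector T l c)]

theorem card_le_Cconst : (Z.card : ℝ) ≤ Cconst 3 (sCard K T) := by
  rw [← Finset.card_filter_add_card_filter_not fun x => logHeight₁ x ≤ 3000 * curveHeight l,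
    Nat.cast_add]
  refine (add_le_add
    ((h.mono (Finset.filter_subset _ _)).card_le_of_logHeight₁_le fun x hx =>
      (Finset.mem_filter.1 hx).2)
    ((h.mono (Finset.filter_subset _ _)).card_le_of_lt_logHeight₁ fun x hx =>
      not_le.1 (Finset.mem_filter.1 hx).2)).trans (packing_bounds_le_Cconst ?_)
  exact Fintype.card_pos.trans_le (Nat.le_add_left _ _)

end IsAgreeingFamily

end Families

section CrossRatio

variable {K : Type*} [Field K]

/-- The determinant of the chosen homogeneous coordinates of two points, in terms of which
`logDist` is defined. -/
noncomputable def bracket (P R : P1 K) : K := P.rep 0 * R.rep 1 - P.rep 1 * R.rep 0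

theorem bracket_ne_zero {P R : P1 K} (h : P ≠ R) : bracket P R ≠ 0 := by
  rw [← Projectivization.independent_pair_iff_ne, Projectivization.independent_iff] at h
  have hrows : LinearIndependent K (Matrix.of ![P.rep, R.rep]).row := by
    have hrep : Projectivization.rep ∘ ![P, R] = ![P.rep, R.rep] := by
      ext i : 1
      fin_cases i <;> rfl
    rwa [hrep] at h
  rw [Matrix.linearIndependent_rows_iff_isUnit, Matrix.isUnit_iff_isUnit_det,
    Matrix.det_fin_two] at hrows
  exact hrows.ne_zero

/-- The coordinate on the projective line that takes the values `0`, `∞` and `1` at `Q 0`, `Q 1`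
and `Q 3`. -/
noncomputable def crossRatio (Q : Fin 4 → P1 K) (P : P1 K) : K :=
  bracket P (Q 0) / bracket P (Q 1) * (bracket (Q 3) (Q 1) / bracket (Q 3) (Q 0))

variable {Q : Fin 4 → P1 K} {P R : P1 K}

/-- This is the Plücker relation between the brackets of `P`, `R`, `Q 0` and `Q 1`. -/
theorem crossRatio_sub_crossRatio (hP : P ≠ Q 1) (hR : R ≠ Q 1) :
    crossRatio Q P - crossRatio Q R =
      bracket (Q 3) (Q 1) / bracket (Q 3) (Q 0) *
        (bracket (Q 0) (Q 1) * bracket P R / (bracket R (Q 1) * bracket P (Q 1))) := by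
  have hP' := bracket_ne_zero hP
  have hR' := bracket_ne_zero hR
  have hplucker : bracket P (Q 0) * bracket R (Q 1) - bracket R (Q 0) * bracket P (Q 1) =
      bracket (Q 0) (Q 1) * bracket P R := by
    simp only [bracket]
    ring
  rw [← hplucker, crossRatio, crossRatio]
  field_simp

variable (hQ : Function.Injective Q)
include hQ

theorem crossRatio_ne_zero (h0 : P ≠ Q 0) (h1 : P ≠ Q 1) : crossRatio Q P ≠ 0 :=
  mul_ne_zero (div_ne_zero (bracket_ne_zero h0) (bracket_ne_zero h1))
    (div_ne_zero (bracket_ne_zero (hQ.ne (by decide))) (bracket_ne_zero (hQ.ne (by decide))))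

theorem crossRatio_self : crossRatio Q (Q 3) = 1 := by
  have h0 := bracket_ne_zero (hQ.ne (show (3 : Fin 4) ≠ 0 by decide))
  have h1 := bracket_ne_zero (hQ.ne (show (3 : Fin 4) ≠ 1 by decide))
  rw [crossRatio]
  field_simp

theorem crossRatio_ne_crossRatio (hP : P ≠ Q 1) (hR : R ≠ Q 1) (hPR : P ≠ R) :
    crossRatio Q P ≠ crossRatio Q R := by
  rw [← sub_ne_zero, crossRatio_sub_crossRatio hP hR]
  have hQ' {i j : Fin 4} (hij : i ≠ j) := bracket_ne_zero (hQ.ne hij)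
  exact mul_ne_zero (div_ne_zero (hQ' (by decide)) (hQ' (by decide)))
    (div_ne_zero (mul_ne_zero (hQ' (by decide)) (bracket_ne_zero hPR))
      (mul_ne_zero (bracket_ne_zero hR) (bracket_ne_zero hP)))

theorem ordinate_crossRatio (h1 : P ≠ Q 1) (h3 : P ≠ Q 3) :
    ordinate (crossRatio Q (Q 2)) (crossRatio Q P) =
      bracket P (Q 2) / bracket P (Q 3) * (bracket (Q 3) (Q 1) / bracket (Q 2) (Q 1)) := by
  have hQ' {i j : Fin 4} (hij : i ≠ j) := bracket_ne_zero (hQ.ne hij)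
  have h01 := hQ' (show 0 ≠ 1 by decide)
  have h21 := hQ' (show 2 ≠ 1 by decide)
  have h30 := hQ' (show 3 ≠ 0 by decide)
  have h31 := hQ' (show 3 ≠ 1 by decide)
  have hP1 := bracket_ne_zero h1
  have hP3 := bracket_ne_zero h3
  rw [ordinate, ← crossRatio_self hQ, crossRatio_sub_crossRatio h1 (hQ.ne (by decide)),
    crossRatio_sub_crossRatio h1 (hQ.ne (by decide))]
  field_simp

end CrossRatio

section LogDist

variable {K : Type*} [Field K] [NumberField K]

theorem infinite_heightOneSpectrum : Infinite (HeightOneSpectrum (𝓞 K)) := by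
  have exists_liesOver (p : Nat.Primes) :
      ∃ v : HeightOneSpectrum (𝓞 K), v.asIdeal.LiesOver (Ideal.span {(p : ℤ)}) := by
    have hp : Prime (p : ℤ) := Nat.prime_iff_prime_int.1 p.2
    have : (Ideal.span {(p : ℤ)}).IsMaximal :=
      PrincipalIdealRing.isMaximal_of_irreducible hp.irreducible
    obtain ⟨M, hM, hMp⟩ :=
      Ideal.exists_maximal_ideal_liesOver_of_isIntegral (S := 𝓞 K) (Ideal.span {(p : ℤ)})
    exact ⟨⟨M, hM.isPrime, Ideal.ne_bot_of_liesOver_of_ne_bot (p := Ideal.span {(p : ℤ)})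
      (by simpa using hp.ne_zero) M⟩, hMp⟩
  choose f hf using exists_liesOver
  refine Infinite.of_injective f fun p q hpq => Subtype.ext ?_
  have hspan : Ideal.span {(p : ℤ)} = Ideal.span {(q : ℤ)} := by
    rw [(hf p).over, (hf q).over, hpq]
  simpa [Ideal.span_singleton_eq_span_singleton, Int.associated_iff_natAbs] using hspan

theorem valuation_eq_exp_neg_ordAt (v : HeightOneSpectrum (𝓞 K)) {x : K} (hx : x ≠ 0) :
    v.valuation K x = WithZero.exp (-ordAt v x) := by
  rw [ordAt, dif_neg hx, neg_neg]
  exact (WithZero.coe_unzero _).symm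

theorem absVal_eq_of_valuation_eq (v : FinitePlace K) {x y : K}
    (h : v.maximalIdeal.valuation K x = v.maximalIdeal.valuation K y) : v x = v y := by
  rw [← FinitePlace.mk_maximalIdeal v, FinitePlace.mk_apply, FinitePlace.mk_apply,
    FinitePlace.norm_embedding', FinitePlace.norm_embedding', h]

variable {v : HeightOneSpectrum (𝓞 K)} {P A B : P1 K}

theorem ne_of_logDist_eq (hAB : A ≠ B) (h : logDist v P A = logDist v P B) : P ≠ A ∧ P ≠ B := by
  constructor <;> rintro rfl
  · rw [logDist, logDist, if_pos rfl, if_neg hAB] at h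
    exact WithTop.top_ne_coe h
  · rw [logDist, logDist, if_pos rfl, if_neg hAB.symm] at h
    exact WithTop.coe_ne_top h

theorem valuation_bracket_div_bracket (hAB : A ≠ B) (h : logDist v P A = logDist v P B) :
    v.valuation K (bracket P A / bracket P B) =
      WithZero.exp (minOrd v (B.rep 0) (B.rep 1) - minOrd v (A.rep 0) (A.rep 1)) := by
  obtain ⟨hPA, hPB⟩ := ne_of_logDist_eq hAB h
  rw [logDist, logDist, if_neg hPA, if_neg hPB, WithTop.coe_inj] at h
  rw [map_div₀, valuation_eq_exp_neg_ordAt v (bracket_ne_zero hPA),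
    valuation_eq_exp_neg_ordAt v (bracket_ne_zero hPB), ← WithZero.exp_sub, bracket, bracket]
  congr 1
  lia

theorem agreeOutside_bracket_div_bracket {T : Finset (HeightOneSpectrum (𝓞 K))} {R : P1 K}
    (hAB : A ≠ B) (hP : ∀ v ∉ T, logDist v P A = logDist v P B)
    (hR : ∀ v ∉ T, logDist v R A = logDist v R B) (k : K) :
    AgreeOutside T (bracket P A / bracket P B * k) (bracket R A / bracket R B * k) :=
  fun v hv => by
    rw [map_mul, map_mul]
    congr 1
    exact absVal_eq_of_valuation_eq v ((valuation_bracket_div_bracket hAB (hP _ hv)).trans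
      (valuation_bracket_div_bracket hAB (hR _ hv)).symm)

variable {T : Finset (HeightOneSpectrum (𝓞 K))} {Q : Fin 4 → P1 K} {F : Finset (P1 K)}

theorem ne_of_forall_logDist_eq (hQ : Function.Injective Q)
    (hP : ∀ v ∉ T, logDist v P (Q 0) = logDist v P (Q 1) ∧ logDist v P (Q 2) = logDist v P (Q 3))
    (i : Fin 4) : P ≠ Q i := by
  have := infinite_heightOneSpectrum (K := K)
  obtain ⟨v, hv⟩ := Infinite.exists_notMem_finset T
  have h01 := ne_of_logDist_eq (hQ.ne (by decide)) (hP v hv).1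
  have h23 := ne_of_logDist_eq (hQ.ne (by decide)) (hP v hv).2
  fin_cases i
  exacts [h01.1, h01.2, h23.1, h23.2]

theorem isAgreeingFamily_image_crossRatio (hQ : Function.Injective Q)
    (hF : ∀ P ∈ F, ∀ v ∉ T,
      logDist v P (Q 0) = logDist v P (Q 1) ∧ logDist v P (Q 2) = logDist v P (Q 3)) :
    IsAgreeingFamily T (crossRatio Q (Q 2)) (F.image (crossRatio Q)) := by
  have hne P (hP : P ∈ F) := ne_of_forall_logDist_eq hQ (hF P hP)
  have crossRatio_ne {P R : P1 K} := crossRatio_ne_crossRatio hQ (P := P) (R := R)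
  have hparameter : crossRatio Q (Q 2) ≠ 1 := by
    rw [← crossRatio_self hQ]
    exact crossRatio_ne (hQ.ne (by decide)) (hQ.ne (by decide)) (hQ.ne (by decide))
  have hne_one P (hP : P ∈ F) : crossRatio Q P ≠ 1 := by
    rw [← crossRatio_self hQ]
    exact crossRatio_ne (hne P hP 1) (hQ.ne (by decide)) (hne P hP 3)
  have agree P (hP : P ∈ F) R (hR : R ∈ F) :
      AgreeOutside T (crossRatio Q P) (crossRatio Q R) :=
    agreeOutside_bracket_div_bracket (hQ.ne (by decide))
      (fun v hv => (hF P hP v hv).1) (fun v hv => (hF R hR v hv).1) _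
  have agree_ordinate P (hP : P ∈ F) R (hR : R ∈ F) :
      AgreeOutside T (ordinate (crossRatio Q (Q 2)) (crossRatio Q P))
        (ordinate (crossRatio Q (Q 2)) (crossRatio Q R)) := by
    rw [ordinate_crossRatio hQ (hne P hP 1) (hne P hP 3),
      ordinate_crossRatio hQ (hne R hR 1) (hne R hR 3)]
    exact agreeOutside_bracket_div_bracket (hQ.ne (by decide))
      (fun v hv => (hF P hP v hv).2) (fun v hv => (hF R hR v hv).2) _
  exact {
    parameter_ne_zero := crossRatio_ne_zero hQ (hQ.ne (by decide)) (hQ.ne (by decide))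
    parameter_ne_one := hparameter
    ne_zero := Finset.forall_mem_image.2 fun P hP => crossRatio_ne_zero hQ (hne P hP 0) (hne P hP 1)
    ne_one := Finset.forall_mem_image.2 hne_one
    ne_parameter := Finset.forall_mem_image.2 fun P hP =>
      crossRatio_ne (hne P hP 1) (hQ.ne (by decide)) (hne P hP 2)
    agree := Finset.forall_mem_image.2 fun P hP => Finset.forall_mem_image.2 (agree P hP)
    agree_ordinate := Finset.forall_mem_image.2 fun P hP =>
      Finset.forall_mem_image.2 (agree_ordinate P hP) }

theorem card_le_Cconst_of_forall_logDist_eq (hQ : Function.Injective Q)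
    (hF : ∀ P ∈ F, ∀ v ∉ T,
      logDist v P (Q 0) = logDist v P (Q 1) ∧ logDist v P (Q 2) = logDist v P (Q 3)) :
    (F.card : ℝ) ≤ Cconst 3 (sCard K T) := by
  have hne P (hP : P ∈ F) := ne_of_forall_logDist_eq hQ (hF P hP)
  have hinj : Set.InjOn (crossRatio Q) F := fun P hP R hR =>
    Function.mtr (crossRatio_ne_crossRatio hQ (hne P hP 1) (hne R hR 1))
  rw [← Finset.card_image_of_injOn hinj]
  exact (isAgreeingFamily_image_crossRatio hQ hF).card_le_Cconst

end LogDist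

theorem finite_of_forall_finset_card_le {α : Type*} {s : Set α} {c : ℝ}
    (h : ∀ F : Finset α, ↑F ⊆ s → (F.card : ℝ) ≤ c) : s.Finite := by
  by_contra hs
  obtain ⟨n, hn⟩ := exists_nat_gt c
  obtain ⟨F, hF, rfl⟩ := Set.Infinite.exists_subset_card_eq hs n
  exact (h F hF).not_gt hn

end FourPoint

/-- **Four-Point Lemma B.** Given four distinct points `Q₁, Q₂, Q₃, Q₄ ∈ ℙ¹(K)`, the set
`ℱ = {P ∈ ℙ¹(K) : δ_𝔭(P,Q₁) = δ_𝔭(P,Q₂), δ_𝔭(P,Q₃) = δ_𝔭(P,Q₄) ∀𝔭 ∉ S}` is finite with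
cardinality at most `C(3,|S|) + 2`. -/
theorem four_point_lemma_B
    {K : Type*} [Field K] [NumberField K]
    (T : Finset (HeightOneSpectrum (𝓞 K)))
    (Q : Fin 4 → P1 K) (hQ : Function.Injective Q) :
    {P : P1 K | ∀ v ∉ T,
        logDist v P (Q 0) = logDist v P (Q 1) ∧
        logDist v P (Q 2) = logDist v P (Q 3)}.Finite ∧
      ({P : P1 K | ∀ v ∉ T,
        logDist v P (Q 0) = logDist v P (Q 1) ∧
        logDist v P (Q 2) = logDist v P (Q 3)}.ncard : ℝ) ≤ Cconst 3 (sCard K T) + 2 := by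
  set ℱ := {P : P1 K | ∀ v ∉ T,
    logDist v P (Q 0) = logDist v P (Q 1) ∧ logDist v P (Q 2) = logDist v P (Q 3)}
  have card_le (F : Finset (P1 K)) (hF : ↑F ⊆ ℱ) : (F.card : ℝ) ≤ Cconst 3 (sCard K T) :=
    FourPoint.card_le_Cconst_of_forall_logDist_eq hQ fun P hP => hF hP
  have hfinite : ℱ.Finite := FourPoint.finite_of_forall_finset_card_le card_le
  refine ⟨hfinite, ?_⟩
  rw [Set.ncard_eq_toFinset_card _ hfinite]
  linarith [card_le hfinite.toFinset hfinite.coe_toFinset.subset]
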